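/- arXiv:2011.04274 — 4 statements merged into one kernel-verified Lean document; each statement's English description precedes it below -/
import Mathlib

section
/- Let 𝒴 be a Polish space, r ∈ [1,∞), and let F : 𝒫_r(𝒴) → ℝ ∪ {+∞} be convex and lower semicontinuous (with respect to 𝒲_r). Then F(I(Q)) ≤ ∫ F(q) Q(dq) for every Q ∈ 𝒫_r(𝒫_r(𝒴)). -/
open MeasureTheory Set Filter
open scoped ENNReal NNReal Topology RealInnerProductSpace

noncomputable section

namespace WOT

/-- The set of couplings of `μ` and `ν`. -/
def Couplings {X Y : Type*} [MeasurableSpace X] [MeasurableSpace Y]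
    (μ : Measure X) (ν : Measure Y) : Set (Measure (X × Y)) :=
  {π | π.map Prod.fst = μ ∧ π.map Prod.snd = ν}

/-- `K` is a disintegration of `π` with respect to its first marginal `μ`. -/
def IsDisint {X Y : Type*} [MeasurableSpace X] [MeasurableSpace Y]
    (π : Measure (X × Y)) (μ : Measure X) (K : X → Measure Y) : Prop :=
  Measurable K ∧ (∀ x, IsProbabilityMeasure (K x)) ∧
    ∀ s : Set (X × Y), MeasurableSet s → π s = ∫⁻ x, K x (Prod.mk x ⁻¹' s) ∂μ

/-- The intensity `I(Q)` of a measure on measures. -/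
def intensity {Y : Type*} [MeasurableSpace Y] (Q : Measure (Measure Y)) : Measure Y :=
  Q.join

/-- The intensity map `Î`. -/
def intensityHat {X Y : Type*} [MeasurableSpace X] [MeasurableSpace Y]
    (P : Measure (X × Measure Y)) : Measure (X × Y) :=
  P.bind fun xp => (Measure.dirac xp.1).prod xp.2

/-- `Λ(μ,ν)`, the set of probability measures on `X × 𝒫(Y)` whose intensity is a coupling. -/
def Lambda {X Y : Type*} [MeasurableSpace X] [MeasurableSpace Y]
    (μ : Measure X) (ν : Measure Y) : Set (Measure (X × Measure Y)) :=
  {P | IsProbabilityMeasure P ∧ (∀ᵐ xp ∂P, IsProbabilityMeasure xp.2) ∧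
    intensityHat P ∈ Couplings μ ν}

/-- Finite `r`-th moment. -/
def FinMom {X : Type*} [MeasurableSpace X] [PseudoMetricSpace X]
    (r : ℝ) (x₀ : X) (μ : Measure X) : Prop :=
  ∫⁻ x, ENNReal.ofReal (dist x x₀ ^ r) ∂μ < ⊤

/-- The growth class `Φ_r`. -/
def PhiR {X : Type*} [PseudoMetricSpace X] (r : ℝ) (x₀ : X) : Set (X → ℝ) :=
  {φ | Continuous φ ∧ ∃ K : ℝ, ∀ x, |φ x| ≤ K * (1 + dist x x₀ ^ r)}

/-- The `r`-Wasserstein distance (valued in `ℝ≥0∞`). -/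
def Wr {Y : Type*} [MeasurableSpace Y] [PseudoMetricSpace Y]
    (r : ℝ) (p q : Measure Y) : ℝ≥0∞ :=
  ⨅ π ∈ Couplings p q, (∫⁻ z : Y × Y, ENNReal.ofReal (dist z.1 z.2 ^ r) ∂π) ^ (1 / r)

/-- `𝒫_r(Y)`: probability measures with finite `r`-th moment. -/
def Pr {Y : Type*} [MeasurableSpace Y] [PseudoMetricSpace Y] (r : ℝ) (y₀ : Y) :
    Set (Measure Y) :=
  {p | IsProbabilityMeasure p ∧ FinMom r y₀ p}

/-- `𝒫_r(𝒫_r(Y))`: probability measures on `𝒫_r(Y)` with finite `r`-th moment w.r.t. `𝒲_r`. -/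
def PrP {Y : Type*} [MeasurableSpace Y] [PseudoMetricSpace Y] (r : ℝ) (y₀ : Y) :
    Set (Measure (Measure Y)) :=
  {Q | IsProbabilityMeasure Q ∧ (∀ᵐ p ∂Q, p ∈ Pr r y₀) ∧
    ∫⁻ p, Wr r p (Measure.dirac y₀) ^ r ∂Q < ⊤}

/-- The positive part of an extended real, valued in `ℝ≥0∞`. -/
def epos (e : EReal) : ℝ≥0∞ := if e = ⊤ then ⊤ else ENNReal.ofReal e.toReal

/-- Extended-real integral: positive part minus negative part (with value `⊥` when
both parts are infinite, i.e. when the integral is not well-defined). -/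
def eInt {X : Type*} [MeasurableSpace X] (f : X → EReal) (μ : Measure X) : EReal :=
  ((∫⁻ x, epos (f x) ∂μ : ℝ≥0∞) : EReal) - ((∫⁻ x, epos (-(f x)) ∂μ : ℝ≥0∞) : EReal)

/-- Extended-real integral with the opposite (`⊤`) convention for ill-defined integrals. -/
def eIntU {X : Type*} [MeasurableSpace X] (f : X → EReal) (μ : Measure X) : EReal :=
  -eInt (fun x => -(f x)) μ

/-- The extended-real integral is well-defined. -/
def eIntWellDef {X : Type*} [MeasurableSpace X] (f : X → EReal) (μ : Measure X) : Prop :=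
  (∫⁻ x, epos (f x) ∂μ ≠ ⊤) ∨ (∫⁻ x, epos (-(f x)) ∂μ ≠ ⊤)

/-- Convergence in the `r`-Wasserstein distance. -/
def WrTendsto {Y : Type*} [MeasurableSpace Y] [PseudoMetricSpace Y]
    (r : ℝ) (ps : ℕ → Measure Y) (p : Measure Y) : Prop :=
  Tendsto (fun n => Wr r (ps n) p) atTop (nhds 0)

/-- (Sequential) lower semicontinuity on `𝒫_r(Y)` w.r.t. `𝒲_r`. -/
def LscWr1 {Y : Type*} [MeasurableSpace Y] [PseudoMetricSpace Y]
    (r : ℝ) (y₀ : Y) (G : Measure Y → EReal) : Prop :=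
  ∀ (p : Measure Y) (ps : ℕ → Measure Y), p ∈ Pr r y₀ → (∀ n, ps n ∈ Pr r y₀) →
    WrTendsto r ps p → G p ≤ liminf (fun n => G (ps n)) atTop

/-- (Sequential) upper semicontinuity on `𝒫_r(Y)` w.r.t. `𝒲_r`. -/
def UscWr1 {Y : Type*} [MeasurableSpace Y] [PseudoMetricSpace Y]
    (r : ℝ) (y₀ : Y) (G : Measure Y → EReal) : Prop :=
  ∀ (p : Measure Y) (ps : ℕ → Measure Y), p ∈ Pr r y₀ → (∀ n, ps n ∈ Pr r y₀) →
    WrTendsto r ps p → limsup (fun n => G (ps n)) atTop ≤ G p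

/-- (Sequential) lower semicontinuity on `X × 𝒫_r(Y)` w.r.t. `d_X × 𝒲_r`. -/
def LscWr {X Y : Type*} [TopologicalSpace X] [MeasurableSpace Y] [PseudoMetricSpace Y]
    (r : ℝ) (y₀ : Y) (C : X × Measure Y → EReal) : Prop :=
  ∀ (x : X) (xs : ℕ → X) (p : Measure Y) (ps : ℕ → Measure Y),
    p ∈ Pr r y₀ → (∀ n, ps n ∈ Pr r y₀) → Tendsto xs atTop (nhds x) → WrTendsto r ps p →
    C (x, p) ≤ liminf (fun n => C (xs n, ps n)) atTop

/-- (Sequential) continuity of a real-valued cost on `X × 𝒫_r(Y)` w.r.t. `d_X × 𝒲_r`. -/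
def ContWr {X Y : Type*} [TopologicalSpace X] [MeasurableSpace Y] [PseudoMetricSpace Y]
    (r : ℝ) (y₀ : Y) (C : X × Measure Y → ℝ) : Prop :=
  ∀ (x : X) (xs : ℕ → X) (p : Measure Y) (ps : ℕ → Measure Y),
    p ∈ Pr r y₀ → (∀ n, ps n ∈ Pr r y₀) → Tendsto xs atTop (nhds x) → WrTendsto r ps p →
    Tendsto (fun n => C (xs n, ps n)) atTop (nhds (C (x, p)))

/-- Convexity of an extended-real-valued function on a set of measures. -/
def EConvexOn {Y : Type*} [MeasurableSpace Y] (S : Set (Measure Y)) (G : Measure Y → EReal) :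
    Prop :=
  ∀ p ∈ S, ∀ q ∈ S, ∀ t : ℝ≥0, t ≤ 1 →
    G ((t : ℝ≥0∞) • p + ((1 - t : ℝ≥0) : ℝ≥0∞) • q)
      ≤ ((t : ℝ) : EReal) * G p + (((1 - t : ℝ≥0) : ℝ) : EReal) * G q

/-- The lower semicontinuous convex envelope (on `𝒫_r(Y)` w.r.t. `𝒲_r`). -/
def cvxEnvWr {Y : Type*} [MeasurableSpace Y] [PseudoMetricSpace Y]
    (r : ℝ) (y₀ : Y) (f : Measure Y → EReal) : Measure Y → EReal :=
  fun p => ⨆ G ∈ {G : Measure Y → EReal |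
    LscWr1 r y₀ G ∧ EConvexOn (Pr r y₀) G ∧ ∀ q ∈ Pr r y₀, G q ≤ f q}, G p

/-- The cost `C̃(x,p) = inf {∫ C(x,q) Q(dq) : Q ∈ 𝒫_r(𝒫_r(Y)), I(Q) = p}`. -/
def tildeC {X Y : Type*} [MeasurableSpace X] [MeasurableSpace Y] [PseudoMetricSpace Y]
    (r : ℝ) (y₀ : Y) (C : X × Measure Y → EReal) : X × Measure Y → EReal :=
  fun xp => ⨅ Q ∈ {Q | Q ∈ PrP r y₀ ∧ intensity Q = xp.2}, eInt (fun q => C (xp.1, q)) Q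

/-- The barycenter of a measure on a normed space. -/
def bary {E : Type*} [NormedAddCommGroup E] [NormedSpace ℝ E] [MeasurableSpace E]
    (p : Measure E) : E :=
  ∫ y, y ∂p

/-- Convex order of measures. -/
def ConvexOrder {E : Type*} [NormedAddCommGroup E] [NormedSpace ℝ E] [MeasurableSpace E]
    (ν' ν : Measure E) : Prop :=
  ∀ θ : E → ℝ, ConvexOn ℝ Set.univ θ →
    eInt (fun y => ((θ y : ℝ) : EReal)) ν' ≤ eInt (fun y => ((θ y : ℝ) : EReal)) ν

/-- The inf-convolution `R_C ψ`. -/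
def RC {X Y : Type*} [MeasurableSpace Y] [PseudoMetricSpace Y]
    (r : ℝ) (y₀ : Y) (C : X × Measure Y → EReal) (ψ : Y → ℝ) : X → EReal :=
  fun x => ⨅ p ∈ Pr r y₀, (((-∫ y, ψ y ∂p : ℝ) : EReal) + C (x, p))

/-- `κ` is a regular conditional distribution of `Yv` given the sub-σ-algebra `m1`. -/
def IsRCD {Ω Y : Type*} [MeasurableSpace Y] (m1 : MeasurableSpace Ω)
    (mΩ : MeasurableSpace Ω) (P : @Measure Ω mΩ) (Yv : Ω → Y) (κ : Ω → Measure Y) : Prop :=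
  (∀ ω, IsProbabilityMeasure (κ ω)) ∧ Measurable[m1] κ ∧
    ∀ A : Set Y, MeasurableSet A → ∀ B : Set Ω, MeasurableSet[m1] B →
      P (B ∩ Yv ⁻¹' A) = ∫⁻ ω in B, κ ω A ∂P

end WOT

open WOT

namespace Jen

lemma scalar (a b : ℝ≥0∞) (ha : a ≠ ⊤) (hb : b ≠ ⊤) :
    ∃ c α β : ℝ≥0∞, c ≠ ⊤ ∧ c * b + α = 1 ∧ c * a + β = 1 ∧ α * a ≤ a - b ∧ β * b ≤ b - a := by
  by_cases h : max a b = 0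
  · have h1 : a = 0 := le_antisymm (h ▸ le_max_left a b) bot_le
    have h2 : b = 0 := le_antisymm (h ▸ le_max_right a b) bot_le
    exact ⟨0, 1, 1, by simp [h1, h2]⟩
  have hm : max a b ≠ ⊤ := by
    rcases max_choice a b with h | h <;> rw [h] <;> assumption
  have hc : (max a b)⁻¹ ≠ ⊤ := ENNReal.inv_ne_top.2 h
  have hcm : (max a b)⁻¹ * max a b = 1 := ENNReal.inv_mul_cancel h hm
  refine ⟨(max a b)⁻¹, 1 - (max a b)⁻¹ * b, 1 - (max a b)⁻¹ * a, hc, ?_, ?_, ?_, ?_⟩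
  · apply add_tsub_cancel_of_le
    calc _ ≤ (max a b)⁻¹ * max a b := by gcongr; exact le_max_right _ _
      _ = 1 := hcm
  · apply add_tsub_cancel_of_le
    calc _ ≤ (max a b)⁻¹ * max a b := by gcongr; exact le_max_left _ _
      _ = 1 := hcm
  · rcases le_total a b with hab | hab
    · rw [max_eq_right hab] at hcm ⊢
      simp [hcm]
    · rw [max_eq_left hab] at hcm ⊢
      rw [ENNReal.sub_mul (fun _ _ => ha), one_mul, mul_right_comm, hcm, one_mul]
  · rcases le_total b a with hab | hab
    · rw [max_eq_left hab] at hcm ⊢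
      simp [hcm]
    · rw [max_eq_right hab] at hcm ⊢
      rw [ENNReal.sub_mul (fun _ _ => hb), one_mul, mul_right_comm, hcm, one_mul]

/-- decomposition of a measure along a finite partition -/
lemma decomp {Y ι : Type*} [MeasurableSpace Y] [Fintype ι] (p : Measure Y) (A : ι → Set Y)
    (hA : ∀ i, MeasurableSet (A i)) (hd : Pairwise (Function.onFun Disjoint A)) (s t : ι → ℝ≥0∞)
    (hst : ∀ i, s i + t i = 1) :
    Measure.sum (fun i => s i • p.restrict (A i)) +
      (Measure.sum (fun i => t i • p.restrict (A i)) + p.restrict (⋃ i, A i)ᶜ) = p := by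
  have h1 : Measure.sum (fun i => s i • p.restrict (A i)) +
      Measure.sum (fun i => t i • p.restrict (A i)) = p.restrict (⋃ i, A i) := by
    rw [Measure.restrict_iUnion hd hA, Measure.sum_add_sum]
    congr 1
    ext1 i
    rw [← add_smul, hst, one_smul]
  rw [← add_assoc, h1]
  exact Measure.restrict_add_restrict_compl (MeasurableSet.iUnion hA)

lemma leftover {Y ι : Type*} [MeasurableSpace Y] [Fintype ι] (p : Measure Y) (A : ι → Set Y)
    (hA : ∀ i, MeasurableSet (A i)) (t u : ι → ℝ≥0∞) (htu : ∀ i, t i * p (A i) ≤ u i)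
    (D : Y → ℝ≥0∞) (R : ℝ≥0∞) (hR : ∀ i, ∀ x ∈ A i, D x ≤ R) :
    ∫⁻ x, D x ∂(Measure.sum (fun i => t i • p.restrict (A i)) + p.restrict (⋃ i, A i)ᶜ)
      ≤ R * ∑ i, u i + ∫⁻ x in (⋃ i, A i)ᶜ, D x ∂p := by
  rw [lintegral_add_measure, lintegral_sum_measure, tsum_fintype, Finset.mul_sum]
  gcongr with i
  rw [lintegral_smul_measure, smul_eq_mul]
  calc t i * ∫⁻ x in A i, D x ∂p ≤ t i * ∫⁻ x in A i, R ∂p := by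
        gcongr 1
        exact setLIntegral_mono' (hA i) (hR i)
    _ = R * (t i * p (A i)) := by
        rw [setLIntegral_const]; ring
    _ ≤ R * u i := by gcongr; exact htu i

lemma coupling {Y ι : Type*} [MeasurableSpace Y] [Fintype ι] (p q : Measure Y)
    [IsProbabilityMeasure p] [IsProbabilityMeasure q] (A : ι → Set Y)
    (hA : ∀ i, MeasurableSet (A i)) (hd : Pairwise (Function.onFun Disjoint A))
    (C : Y × Y → ℝ≥0∞) (D : Y → ℝ≥0∞) (hD : Measurable D) (R e k : ℝ≥0∞)
    (hR : ∀ i, ∀ x ∈ A i, D x ≤ R)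
    (he : ∀ i, ∀ x ∈ A i, ∀ y ∈ A i, C (x, y) ≤ e)
    (hk : ∀ x y, C (x, y) ≤ k * (D x + D y)) :
    ∃ π ∈ Couplings p q, ∫⁻ z, C z ∂π ≤ e +
      k * ((R * ∑ i, (p (A i) - q (A i)) + ∫⁻ x in (⋃ i, A i)ᶜ, D x ∂p) +
        (R * ∑ i, (q (A i) - p (A i)) + ∫⁻ x in (⋃ i, A i)ᶜ, D x ∂q)) := by
  choose c α β hc h1 h2 h3 h4 using fun i =>
    scalar (p (A i)) (q (A i)) (measure_ne_top _ _) (measure_ne_top _ _)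
  have dp := decomp p A hA hd _ _ h1
  have dq := decomp q A hA hd _ _ h2
  set p1 := Measure.sum (fun i => (c i * q (A i)) • p.restrict (A i)) with hp1
  set q1 := Measure.sum (fun i => (c i * p (A i)) • q.restrict (A i)) with hq1
  set p' := Measure.sum (fun i => α i • p.restrict (A i)) + p.restrict (⋃ i, A i)ᶜ with hp'
  set q' := Measure.sum (fun i => β i • q.restrict (A i)) + q.restrict (⋃ i, A i)ᶜ with hq'
  have lp := leftover p A hA α _ h3 D R hR
  have lq := leftover q A hA β _ h4 D R hR
  have fp1 : p1 univ ≤ 1 := by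
    rw [← measure_univ (μ := p)]; conv_rhs => rw [← dp]
    simp
  have fp' : p' univ ≤ 1 := by
    rw [← measure_univ (μ := p)]; conv_rhs => rw [← dp]
    simp
  have fq' : q' univ ≤ 1 := by
    rw [← measure_univ (μ := q)]; conv_rhs => rw [← dq]
    simp
  have i1 : IsFiniteMeasure p' := ⟨fp'.trans_lt ENNReal.one_lt_top⟩
  have i2 : IsFiniteMeasure q' := ⟨fq'.trans_lt ENNReal.one_lt_top⟩
  have m1 : p1 univ = q1 univ := by
    simp only [hp1, hq1, Measure.sum_apply _ MeasurableSet.univ, Measure.smul_apply, smul_eq_mul,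
      Measure.restrict_apply_univ]
    congr 1; ext1 i; ring
  have m2 : p' univ = q' univ := by
    have a1 : p1 univ + p' univ = 1 := by
      rw [← Measure.add_apply, dp]; simp
    have a2 : p1 univ + q' univ = 1 := by
      rw [m1, ← Measure.add_apply, dq]; simp
    exact (ENNReal.add_right_inj (fp1.trans_lt ENNReal.one_lt_top).ne).1 (a1.trans a2.symm)
  set π1 := Measure.sum (fun i => c i • (p.restrict (A i)).prod (q.restrict (A i))) with hπ1
  set π2 := (p' univ)⁻¹ • p'.prod q' with hπ2
  have π1f : π1.map Prod.fst = p1 := by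
    rw [hπ1, Measure.map_sum measurable_fst.aemeasurable]
    simp only [Measure.map_smul, Measure.map_fst_prod, Measure.restrict_apply_univ, smul_smul]
    rfl
  have π1s : π1.map Prod.snd = q1 := by
    rw [hπ1, Measure.map_sum measurable_snd.aemeasurable]
    simp only [Measure.map_smul, Measure.map_snd_prod, Measure.restrict_apply_univ, smul_smul]
    rfl
  have π2f : π2.map Prod.fst = p' := by
    rw [hπ2, Measure.map_smul, Measure.map_fst_prod, smul_smul, ← m2]
    by_cases h : p' univ = 0
    · rw [Measure.measure_univ_eq_zero] at h
      rw [h]; simp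
    · rw [ENNReal.inv_mul_cancel h (measure_ne_top _ _), one_smul]
  have π2s : π2.map Prod.snd = q' := by
    rw [hπ2, Measure.map_smul, Measure.map_snd_prod, smul_smul]
    by_cases h : p' univ = 0
    · have h' := m2 ▸ h
      rw [Measure.measure_univ_eq_zero] at h'
      rw [h']; simp
    · rw [ENNReal.inv_mul_cancel h (measure_ne_top _ _), one_smul]
  refine ⟨π1 + π2, ⟨?_, ?_⟩, ?_⟩
  · rw [Measure.map_add _ _ measurable_fst, π1f, π2f, dp]
  · rw [Measure.map_add _ _ measurable_snd, π1s, π2s, dq]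
  rw [lintegral_add_measure]
  gcongr
  · calc ∫⁻ z, C z ∂π1 = ∑' i, c i * ∫⁻ z in A i ×ˢ A i, C z ∂(p.prod q) := by
          rw [hπ1, lintegral_sum_measure]
          simp [Measure.prod_restrict, lintegral_smul_measure]
      _ ≤ ∑' i, c i * ∫⁻ z in A i ×ˢ A i, e ∂(p.prod q) := by
          gcongr 2 with i
          apply setLIntegral_mono' ((hA i).prod (hA i))
          rintro ⟨x, y⟩ ⟨hx, hy⟩
          exact he i x hx y hy
      _ = e * p1 univ := by
          rw [hp1, Measure.sum_apply _ MeasurableSet.univ, ← ENNReal.tsum_mul_left]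
          congr 1; ext1 i
          simp; ring
      _ ≤ e := mul_le_of_le_one_right' fp1
  · calc ∫⁻ z, C z ∂π2 ≤ ∫⁻ z, k * (D z.1 + D z.2) ∂π2 := lintegral_mono fun z => hk z.1 z.2
      _ = k * (∫⁻ x, D x ∂p' + ∫⁻ y, D y ∂q') := by
          rw [lintegral_const_mul _ (by fun_prop), lintegral_add_left (by fun_prop)]
          conv_rhs => rw [← π2f, lintegral_map hD measurable_fst, ← π2s,
            lintegral_map hD measurable_snd]
      _ ≤ _ := by gcongr

end Jen

namespace Jen

/-- measurable functions of growth at most `d^r` -/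
def Gr {Y : Type*} [MeasurableSpace Y] [PseudoMetricSpace Y] (r : ℝ) (y₀ : Y) (φ : Y → ℝ) : Prop :=
  Measurable φ ∧ ∃ K : ℝ, ∀ x, |φ x| ≤ K * (1 + dist x y₀ ^ r)

section
set_option linter.unusedSectionVars false
variable {Y : Type*} [MeasurableSpace Y] [MetricSpace Y] [SecondCountableTopology Y]
    [BorelSpace Y] {r : ℝ} {y₀ : Y}

lemma meas_dr (r : ℝ) (y₀ : Y) : Measurable fun x : Y => dist x y₀ ^ r := by fun_prop

lemma Gr.integrable {φ : Y → ℝ} (h : Gr r y₀ φ) {p : Measure Y} (hp : p ∈ Pr r y₀) :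
    Integrable φ p := by
  obtain ⟨hm, K, hK⟩ := h
  obtain ⟨hp1, hp2⟩ := hp
  have : Integrable (fun x : Y => dist x y₀ ^ r) p := by
    refine ⟨(meas_dr r y₀).aestronglyMeasurable, ?_⟩
    rw [hasFiniteIntegral_iff_ofReal (Eventually.of_forall fun x => by positivity)]
    exact hp2
  refine (((integrable_const (1:ℝ)).add this).const_mul K).mono' hm.aestronglyMeasurable ?_
  exact Eventually.of_forall hK

lemma Gr.const (c : ℝ) : Gr r y₀ (fun _ : Y => c) := by
  refine ⟨measurable_const, |c|, fun x => ?_⟩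
  have : 0 ≤ dist x y₀ ^ r := by positivity
  nlinarith [abs_nonneg c]

lemma Gr.add {φ ψ : Y → ℝ} (h : Gr r y₀ φ) (h' : Gr r y₀ ψ) : Gr r y₀ (fun x => φ x + ψ x) := by
  obtain ⟨hm, K, hK⟩ := h
  obtain ⟨hm', K', hK'⟩ := h'
  refine ⟨hm.add hm', K + K', fun x => ?_⟩
  have := abs_add_le (φ x) (ψ x)
  linarith [hK x, hK' x]

lemma Gr.mul {φ : Y → ℝ} (h : Gr r y₀ φ) (c : ℝ) : Gr r y₀ (fun x => c * φ x) := by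
  obtain ⟨hm, K, hK⟩ := h
  refine ⟨hm.const_mul c, |c| * K, fun x => ?_⟩
  rw [abs_mul, mul_assoc]
  exact mul_le_mul_of_nonneg_left (hK x) (abs_nonneg c)

lemma Gr.sum {ι : Type*} (s : Finset ι) {φ : ι → Y → ℝ} (h : ∀ i, Gr r y₀ (φ i)) :
    Gr r y₀ (fun x => ∑ i ∈ s, φ i x) := by
  classical
  induction s using Finset.induction_on with
  | empty => simpa using Gr.const 0
  | insert a s ha ih =>
    simp only [Finset.sum_insert ha]
    exact (h a).add ih

lemma sub_le_of_close {p q : Measure Y} [IsProbabilityMeasure p] [IsProbabilityMeasure q]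
    {A : Set Y} {δ : ℝ} (hA : |p.real A - q.real A| < δ) :
    p A - q A ≤ ENNReal.ofReal δ ∧ q A - p A ≤ ENNReal.ofReal δ := by
  have hδ : 0 ≤ δ := (abs_nonneg _).trans hA.le
  have := abs_lt.1 hA
  rw [tsub_le_iff_right, tsub_le_iff_right, ← ofReal_measureReal (μ := p), 
    ← ofReal_measureReal (μ := q), ← ENNReal.ofReal_add hδ measureReal_nonneg,
    ← ENNReal.ofReal_add hδ measureReal_nonneg]
  exact ⟨ENNReal.ofReal_le_ofReal (by linarith), ENNReal.ofReal_le_ofReal (by linarith)⟩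

lemma dist_bound (hr : 1 ≤ r) (x y : Y) : ENNReal.ofReal (dist x y ^ r) ≤ ENNReal.ofReal (2 ^ r) *
    (ENNReal.ofReal (dist x y₀ ^ r) + ENNReal.ofReal (dist y y₀ ^ r)) := by
  rw [← ENNReal.ofReal_add (by positivity) (by positivity), ← ENNReal.ofReal_mul (by positivity)]
  apply ENNReal.ofReal_le_ofReal
  have h : dist x y ≤ 2 * max (dist x y₀) (dist y y₀) := by
    have := dist_triangle_right x y y₀
    linarith [le_max_left (dist x y₀) (dist y y₀), le_max_right (dist x y₀) (dist y y₀)]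
  have h0 : 0 ≤ max (dist x y₀) (dist y y₀) := le_max_of_le_left dist_nonneg
  calc dist x y ^ r ≤ (2 * max (dist x y₀) (dist y y₀)) ^ r :=
        Real.rpow_le_rpow dist_nonneg h (by linarith)
    _ = 2 ^ r * (max (dist x y₀) (dist y y₀)) ^ r := Real.mul_rpow (by norm_num) h0
    _ ≤ _ := by
      gcongr
      have a : 0 ≤ dist x y₀ ^ r := by positivity
      have b : 0 ≤ dist y y₀ ^ r := by positivity
      rcases max_choice (dist x y₀) (dist y y₀) with h | h <;> rw [h] <;> linarith

lemma exists_tail {p : Measure Y} (hp : p ∈ Pr r y₀) (A : ℕ → Set Y)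
    (hA : ∀ n, MeasurableSet (A n)) (hU : ⋃ n, A n = univ) {θ : ℝ} (hθ : 0 < θ) :
    ∃ N : ℕ, ∫⁻ x in (⋃ i : Fin N, A i)ᶜ, ENNReal.ofReal (dist x y₀ ^ r) ∂p
      ≤ ENNReal.ofReal θ := by
  have hm : ∀ N : ℕ, MeasurableSet (⋃ i : Fin N, A i)ᶜ :=
    fun N => (MeasurableSet.iUnion fun i : Fin N => hA i).compl
  have key := tendsto_measure_iInter_atTop
    (μ := p.withDensity fun x => ENNReal.ofReal (dist x y₀ ^ r))
    (s := fun N : ℕ => (⋃ i : Fin N, A i)ᶜ) (fun N => (hm N).nullMeasurableSet)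
    (by
      intro M N hMN
      apply compl_subset_compl.2
      apply iUnion_subset
      intro i
      exact subset_iUnion (fun j : Fin N => A j) (Fin.castLE hMN i))
    ⟨0, by
      rw [withDensity_apply _ (hm 0)]
      exact ((setLIntegral_le_lintegral _ _).trans_lt hp.2).ne⟩
  have e : ⋂ N : ℕ, (⋃ i : Fin N, A i)ᶜ = ∅ := by
    rw [← compl_iUnion, compl_empty_iff, eq_univ_iff_forall]
    intro x
    have : x ∈ ⋃ n, A n := hU ▸ mem_univ x
    obtain ⟨n, hn⟩ := mem_iUnion.1 this
    exact mem_iUnion.2 ⟨n + 1, mem_iUnion.2 ⟨⟨n, by omega⟩, hn⟩⟩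
  rw [e, measure_empty] at key
  obtain ⟨N, hN⟩ := (key.eventually (gt_mem_nhds (ENNReal.ofReal_pos.2 hθ))).exists
  refine ⟨N, ?_⟩
  simp only [Function.comp] at hN
  rw [withDensity_apply _ (hm N)] at hN
  exact hN.le

lemma nbhd (hr : 1 ≤ r) {p₀ : Measure Y} (hp₀ : p₀ ∈ Pr r y₀) {κ : ℝ} (hκ : 0 < κ) :
    ∃ (N : ℕ) (φ : Option (Fin N) → Y → ℝ), (∀ i, Gr r y₀ (φ i)) ∧ ∃ δ > 0,
      ∀ p ∈ Pr r y₀, (∀ i, |∫ x, φ i x ∂p - ∫ x, φ i x ∂p₀| < δ) → 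
        Wr r p p₀ ≤ ENNReal.ofReal κ := by
  have r0 : 0 < r := by linarith
  obtain ⟨A, hA, hAb, hAd, hAU, hAdis⟩ :=
    SeparableSpace.exists_measurable_partition_diam_le Y (half_pos hκ)
  set θ : ℝ := κ ^ r / (10 * 2 ^ r) with hθ
  have θ0 : 0 < θ := by positivity
  obtain ⟨N, hN⟩ := exists_tail hp₀ A hA hAU θ0
  have hbd : Bornology.IsBounded (⋃ i : Fin N, A i) :=
    Bornology.isBounded_iUnion.2 fun i => hAb i
  obtain ⟨R0, hR0⟩ := (Metric.isBounded_iff_subset_closedBall y₀).1 hbd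
  set R : ℝ := (max R0 0) ^ r with hR
  have hRn : 0 ≤ R := by positivity
  have hRA : ∀ i : Fin N, ∀ x ∈ A i, dist x y₀ ^ r ≤ R := by
    intro i x hx
    have : dist x y₀ ≤ R0 := hR0 (mem_iUnion.2 ⟨i, hx⟩)
    exact Real.rpow_le_rpow dist_nonneg (this.trans (le_max_left _ _)) r0.le
  set B : Set Y := (⋃ i : Fin N, A i)ᶜ with hB
  have hBm : MeasurableSet B := (MeasurableSet.iUnion fun i : Fin N => hA i).compl
  set δ : ℝ := θ / (R * N + 1) with hδ
  have δ0 : 0 < δ := by positivity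
  have hδθ : δ ≤ θ := div_le_self θ0.le (by nlinarith [mul_nonneg hRn (Nat.cast_nonneg (α := ℝ) N)])
  have hδR : R * (N * δ) ≤ θ := by
    have : δ * (R * N + 1) = θ := div_mul_cancel₀ _ (by positivity)
    nlinarith
  set φ : Option (Fin N) → Y → ℝ := fun o => match o with
    | none => B.indicator fun x => dist x y₀ ^ r
    | some i => (A i).indicator fun _ => 1 with hφ
  have hG : ∀ i, Gr r y₀ (φ i) := by
    rintro (_ | i)
    · refine ⟨(meas_dr r y₀).indicator hBm, 1, fun x => ?_⟩
      have : 0 ≤ dist x y₀ ^ r := by positivity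
      by_cases hx : x ∈ B
      · simp [hφ, hx, abs_of_nonneg this]
      · simp [hφ, hx]; positivity
    · refine ⟨measurable_const.indicator (hA i), 1, fun x => ?_⟩
      have : 0 ≤ dist x y₀ ^ r := by positivity
      by_cases hx : x ∈ A i
      · simp [hφ, hx, this]
      · simp [hφ, hx]; positivity
  refine ⟨N, φ, hG, δ, δ0, fun p hp hclose => ?_⟩
  have ip : IsProbabilityMeasure p := hp.1
  have ip₀ : IsProbabilityMeasure p₀ := hp₀.1
  have hI : ∀ q ∈ Pr r y₀, ∫⁻ x in B, ENNReal.ofReal (dist x y₀ ^ r) ∂q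
      = ENNReal.ofReal (∫ x, φ none x ∂q) := by
    intro q hq
    rw [ofReal_integral_eq_lintegral_ofReal ((hG none).integrable hq)
      (Eventually.of_forall fun x => indicator_nonneg (fun x _ => by positivity) x),
      ← lintegral_indicator hBm]
    congr 1; ext1 x
    by_cases hx : x ∈ B <;> simp [hφ, hx]
  have hB1 : ∫⁻ x in B, ENNReal.ofReal (dist x y₀ ^ r) ∂p ≤ ENNReal.ofReal (2 * θ) := by
    have h1 := hN
    rw [hI _ hp₀] at h1
    rw [hI _ hp]
    have h2 := (ENNReal.ofReal_le_ofReal_iff θ0.le).1 h1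
    apply ENNReal.ofReal_le_ofReal
    have := abs_lt.1 (hclose none)
    linarith
  have hcl : ∀ i : Fin N, |p.real (A i) - p₀.real (A i)| < δ := by
    intro i
    have := hclose (some i)
    simpa [hφ, integral_indicator_const, hA] using this
  obtain ⟨π, hπ, hcost⟩ := coupling p p₀ (fun i : Fin N => A i) (fun i => hA i)
    (fun i j hij => hAdis (fun h => hij (Fin.ext h)))
    (fun z => ENNReal.ofReal (dist z.1 z.2 ^ r)) (fun x => ENNReal.ofReal (dist x y₀ ^ r))
    (meas_dr r y₀).ennreal_ofReal (ENNReal.ofReal R) (ENNReal.ofReal ((κ / 2) ^ r))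
    (ENNReal.ofReal (2 ^ r))
    (fun i x hx => ENNReal.ofReal_le_ofReal (hRA i x hx))
    (fun i x hx y hy => ENNReal.ofReal_le_ofReal (Real.rpow_le_rpow dist_nonneg
      ((Metric.dist_le_diam_of_mem (hAb i) hx hy).trans (hAd i)) r0.le))
    (dist_bound hr)
  have hS : ∀ f : Fin N → ℝ≥0∞, (∀ i, f i ≤ ENNReal.ofReal δ) →
      ENNReal.ofReal R * ∑ i, f i ≤ ENNReal.ofReal θ := by
    intro f hf
    calc ENNReal.ofReal R * ∑ i, f i ≤ ENNReal.ofReal R * ∑ i : Fin N, ENNReal.ofReal δ := by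
          gcongr with i; exact hf i
      _ = ENNReal.ofReal (R * (N * δ)) := by
          rw [ENNReal.ofReal_mul hRn, ENNReal.ofReal_mul (by positivity)]; simp
      _ ≤ _ := ENNReal.ofReal_le_ofReal hδR
  have hfin : ∫⁻ z : Y × Y, ENNReal.ofReal (dist z.1 z.2 ^ r) ∂π ≤ ENNReal.ofReal κ ^ r := by
    refine hcost.trans ?_
    calc _ ≤ ENNReal.ofReal ((κ / 2) ^ r) + ENNReal.ofReal (2 ^ r) *
          ((ENNReal.ofReal θ + ENNReal.ofReal (2 * θ)) + (ENNReal.ofReal θ + ENNReal.ofReal θ)) := by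
          gcongr
          · exact hS _ fun i => (sub_le_of_close (hcl i)).1
          · exact hS _ fun i => (sub_le_of_close (hcl i)).2
      _ = ENNReal.ofReal ((κ / 2) ^ r + 2 ^ r * ((θ + 2 * θ) + (θ + θ))) := by
          rw [ENNReal.ofReal_add (by positivity) (by positivity),
            ENNReal.ofReal_mul (p := 2 ^ r) (by positivity), ENNReal.ofReal_add (by positivity) (by positivity),
            ENNReal.ofReal_add (by positivity) (by positivity),
            ENNReal.ofReal_add (by positivity) (by positivity)]
      _ ≤ ENNReal.ofReal (κ ^ r) := by
          apply ENNReal.ofReal_le_ofReal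
          have h2 : (2:ℝ) ≤ 2 ^ r := by
            calc (2:ℝ) = 2 ^ (1:ℝ) := by simp
              _ ≤ 2 ^ r := Real.rpow_le_rpow_of_exponent_le (by norm_num) hr
          have h3 : (κ / 2) ^ r ≤ κ ^ r / 2 := by
            rw [Real.div_rpow hκ.le (by norm_num)]
            gcongr
          have h4 : 2 ^ r * (5 * θ) = κ ^ r / 2 := by
            rw [hθ]; field_simp; norm_num
          nlinarith
      _ = ENNReal.ofReal κ ^ r := (ENNReal.ofReal_rpow_of_pos hκ).symm
  calc Wr r p p₀ ≤ (∫⁻ z : Y × Y, ENNReal.ofReal (dist z.1 z.2 ^ r) ∂π) ^ (1 / r) :=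
        iInf₂_le π hπ
    _ ≤ (ENNReal.ofReal κ ^ r) ^ (1 / r) := ENNReal.rpow_le_rpow hfin (by positivity)
    _ = ENNReal.ofReal κ := by
      rw [← ENNReal.rpow_mul, mul_one_div_cancel r0.ne', ENNReal.rpow_one]

end
end Jen

namespace Jen
section
set_option linter.unusedSectionVars false
variable {Y : Type*} [MeasurableSpace Y] [MetricSpace Y] [SecondCountableTopology Y]
    [BorelSpace Y] {r : ℝ} {y₀ : Y}

lemma lsc_nbhd (hr : 1 ≤ r) {F : Measure Y → EReal} (hlsc : LscWr1 r y₀ F)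
    {p₀ : Measure Y} (hp₀ : p₀ ∈ Pr r y₀) {c : ℝ} (hc : (c : EReal) < F p₀) :
    ∃ (N : ℕ) (φ : Option (Fin N) → Y → ℝ), (∀ i, Gr r y₀ (φ i)) ∧ ∃ δ > 0,
      ∀ p ∈ Pr r y₀, (∀ i, |∫ x, φ i x ∂p - ∫ x, φ i x ∂p₀| < δ) → (c : EReal) < F p := by
  by_contra! hcon
  have : ∀ n : ℕ, ∃ p ∈ Pr r y₀, Wr r p p₀ ≤ ENNReal.ofReal (1 / ((n : ℝ) + 1)) ∧ F p ≤ c := by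
    intro n
    obtain ⟨N, φ, hG, δ, δ0, h⟩ := nbhd hr hp₀ (κ := 1 / ((n : ℝ) + 1)) (by positivity)
    obtain ⟨p, hp, hcl, hF⟩ := hcon N φ hG δ δ0
    exact ⟨p, hp, h p hp hcl, hF⟩
  choose ps h1 h2 h3 using this
  have ht : WrTendsto r ps p₀ := by
    have h0 : Tendsto (fun n : ℕ => ENNReal.ofReal (1 / ((n : ℝ) + 1))) atTop (𝓝 0) := by
      rw [← ENNReal.ofReal_zero]
      exact ENNReal.tendsto_ofReal tendsto_one_div_add_atTop_nhds_zero_nat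
    exact tendsto_of_tendsto_of_tendsto_of_le_of_le tendsto_const_nhds h0 (fun _ => bot_le) h2
  have h4 := hlsc p₀ ps hp₀ h1 ht
  have h5 : liminf (fun n => F (ps n)) atTop ≤ liminf (fun _ : ℕ => (c : EReal)) atTop :=
    liminf_le_liminf (Eventually.of_forall h3)
  rw [liminf_const] at h5
  exact absurd hc (not_lt.2 (h4.trans h5))

lemma Pr_convex {p q : Measure Y} (hp : p ∈ Pr r y₀) (hq : q ∈ Pr r y₀) {t : ℝ≥0} (ht : t ≤ 1) :
    (t : ℝ≥0∞) • p + ((1 - t : ℝ≥0) : ℝ≥0∞) • q ∈ Pr r y₀ := by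
  have i1 := hp.1
  have i2 := hq.1
  refine ⟨⟨?_⟩, ?_⟩
  · simp only [Measure.add_apply, Measure.smul_apply, measure_univ, smul_eq_mul, mul_one]
    rw [← ENNReal.coe_add, add_tsub_cancel_of_le ht, ENNReal.coe_one]
  · unfold FinMom
    rw [lintegral_add_measure, lintegral_smul_measure, lintegral_smul_measure, smul_eq_mul,
      smul_eq_mul]
    exact ENNReal.add_lt_top.2 ⟨ENNReal.mul_lt_top ENNReal.coe_lt_top hp.2,
      ENNReal.mul_lt_top ENNReal.coe_lt_top hq.2⟩

lemma integral_comb {p q : Measure Y} (hp : p ∈ Pr r y₀) (hq : q ∈ Pr r y₀) (t s : ℝ≥0)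
    {φ : Y → ℝ} (h : Gr r y₀ φ) :
    ∫ x, φ x ∂((t : ℝ≥0∞) • p + (s : ℝ≥0∞) • q) = t * ∫ x, φ x ∂p + s * ∫ x, φ x ∂q := by
  rw [integral_add_measure ((h.integrable hp).smul_measure ENNReal.coe_ne_top)
    ((h.integrable hq).smul_measure ENNReal.coe_ne_top), integral_smul_measure,
    integral_smul_measure]
  simp

lemma sep (hr : 1 ≤ r) {F : Measure Y → EReal} 
    (hconv : EConvexOn (Pr r y₀) F) (hlsc : LscWr1 r y₀ F)
    {p₁ : Measure Y} (hp₁ : p₁ ∈ Pr r y₀) {c₁ : ℝ} (hc₁ : F p₁ ≤ c₁)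
    {p₀ : Measure Y} (hp₀ : p₀ ∈ Pr r y₀) {c : ℝ} (hc : (c : EReal) < F p₀) :
    ∃ ψ : Y → ℝ, Gr r y₀ ψ ∧ ∃ s : ℝ, 0 ≤ s ∧ ∫ x, ψ x ∂p₀ + s * c < 0 ∧
      ∀ p ∈ Pr r y₀, ∀ t : ℝ, F p ≤ t → 0 < ∫ x, ψ x ∂p + s * t := by
  obtain ⟨c', hcc', hc'⟩ := EReal.lt_iff_exists_real_btwn.1 hc
  have hcc' : c < c' := by exact_mod_cast hcc'
  obtain ⟨N, φ, hG, δ, δ0, h⟩ := lsc_nbhd hr hlsc hp₀ hc'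
  let e : Measure Y → (Option (Fin N) → ℝ) := fun p i => ∫ x, φ i x ∂p
  let A : Set ((Option (Fin N) → ℝ) × ℝ) := {z | ∃ p ∈ Pr r y₀, e p = z.1 ∧ F p ≤ (z.2 : EReal)}
  have hA : Convex ℝ A := by
    rintro ⟨_, t1⟩ ⟨p, hp, rfl, ht1⟩ ⟨_, t2⟩ ⟨q, hq, rfl, ht2⟩ a b ha hb hab
    lift a to ℝ≥0 using ha
    lift b to ℝ≥0 using hb
    have hab' : a + b = 1 := by exact_mod_cast hab
    have ha1 : a ≤ 1 := hab' ▸ le_self_add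
    have hb1 : b = 1 - a := by rw [← hab']; simp
    have hb2 : ((1 - a : ℝ≥0) : ℝ) = b := by rw [hb1]
    refine ⟨_, Pr_convex hp hq ha1, ?_, ?_⟩
    · ext i
      simp only [e]
      rw [integral_comb hp hq _ _ (hG i), ← hb1]
      simp
    · refine (hconv p hp q hq a ha1).trans ?_
      rw [hb2]
      have e1 : ((a : ℝ) : EReal) * F p ≤ ((a : ℝ) : EReal) * (t1 : EReal) :=
        mul_le_mul_of_nonneg_left ht1 (by exact_mod_cast a.2)
      have e2 : ((b : ℝ) : EReal) * F q ≤ ((b : ℝ) : EReal) * (t2 : EReal) :=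
        mul_le_mul_of_nonneg_left ht2 (by exact_mod_cast b.2)
      refine (add_le_add e1 e2).trans ?_
      simp
  have hx : (e p₀, c) ∉ closure A := by
    intro hmem
    let O : Set ((Option (Fin N) → ℝ) × ℝ) := Metric.ball (e p₀) δ ×ˢ Iio c'
    have hO : IsOpen O := Metric.isOpen_ball.prod isOpen_Iio
    obtain ⟨⟨v, t⟩, ⟨hv, ht⟩, p, hp, hpe, hpF⟩ :=
      mem_closure_iff.1 hmem O hO ⟨Metric.mem_ball_self δ0, hcc'⟩
    simp only at hpe hpF hv ht
    subst hpe
    have := h p hp (fun i => by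
      have := (dist_le_pi_dist (e p) (e p₀) i).trans_lt hv
      rwa [Real.dist_eq] at this)
    have h2 : (t : EReal) < c' := by exact_mod_cast ht
    exact absurd (this.trans_le hpF) (not_lt.2 h2.le)
  obtain ⟨f, u, hf1, hf2⟩ := geometric_hahn_banach_point_closed hA.closure isClosed_closure hx
  let g : (Option (Fin N) → ℝ) →ₗ[ℝ] ℝ := f.toLinearMap ∘ₗ LinearMap.inl ℝ _ _
  let s : ℝ := f (0, 1)
  have hf : ∀ v t, f (v, t) = g v + s * t := by
    intro v t
    have : (v, t) = (v, (0:ℝ)) + t • ((0 : Option (Fin N) → ℝ), (1:ℝ)) := by simp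
    rw [this, map_add, map_smul]
    simp [g, s, mul_comm]
  let w : Option (Fin N) → ℝ := fun i => g (fun j => if i = j then 1 else 0)
  have hg : ∀ v, g v = ∑ i, w i * v i := by
    intro v
    rw [LinearMap.pi_apply_eq_sum_univ g v]
    simp [w, mul_comm]
  have hψ : Gr r y₀ (fun x => (∑ i, w i * φ i x) + -u) :=
    (Gr.sum Finset.univ fun i => (hG i).mul (w i)).add (Gr.const _)
  have hint : ∀ p ∈ Pr r y₀, ∫ x, ((∑ i, w i * φ i x) + -u) ∂p = g (e p) - u := by
    intro p hp
    have := hp.1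
    rw [integral_add ((Gr.sum Finset.univ fun i => (hG i).mul (w i)).integrable hp)
      (integrable_const _), integral_finsetSum _ fun i _ => ((hG i).mul (w i)).integrable hp, hg]
    simp [e, integral_const_mul, sub_eq_add_neg]
  have hpos : ∀ p ∈ Pr r y₀, ∀ t : ℝ, F p ≤ t →
      0 < ∫ x, ((∑ i, w i * φ i x) + -u) ∂p + s * t := by
    intro p hp t ht
    have := hf2 (e p, t) (subset_closure ⟨p, hp, rfl, ht⟩)
    rw [hf] at this
    rw [hint p hp]; linarith
  refine ⟨_, hψ, s, ?_, ?_, hpos⟩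
  · by_contra! hs
    set J := ∫ x, ((∑ i, w i * φ i x) + -u) ∂p₁ with hJ
    have h1 := hpos p₁ hp₁ (max c₁ (J / (-s))) (hc₁.trans (by exact_mod_cast le_max_left _ _))
    have h2 : J / (-s) ≤ max c₁ (J / (-s)) := le_max_right _ _
    have h3 := (div_le_iff₀ (by linarith : 0 < -s)).1 h2
    rw [← hJ] at h1
    linarith
  · rw [hint p₀ hp₀]
    rw [hf] at hf1
    linarith

lemma minor_of_pos {F : Measure Y → EReal} {p₀ : Measure Y} (hp₀ : p₀ ∈ Pr r y₀) {c : ℝ}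
    {ψ : Y → ℝ} (hψ : Gr r y₀ ψ) {s : ℝ} (hs : 0 < s) (h0 : ∫ x, ψ x ∂p₀ + s * c < 0)
    (h : ∀ p ∈ Pr r y₀, ∀ t : ℝ, F p ≤ t → 0 < ∫ x, ψ x ∂p + s * t) :
    ∃ ψ : Y → ℝ, Gr r y₀ ψ ∧ c < ∫ x, ψ x ∂p₀ ∧
      ∀ p ∈ Pr r y₀, ∀ t : ℝ, F p ≤ t → ∫ x, ψ x ∂p ≤ t := by
  refine ⟨_, hψ.mul (-s⁻¹), ?_, fun p hp t ht => ?_⟩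
  · rw [integral_const_mul]
    have : s⁻¹ * (∫ x, ψ x ∂p₀ + s * c) < 0 := mul_neg_of_pos_of_neg (inv_pos.2 hs) h0
    rw [mul_add, inv_mul_cancel_left₀ hs.ne'] at this
    linarith
  · rw [integral_const_mul]
    have : 0 < s⁻¹ * (∫ x, ψ x ∂p + s * t) := mul_pos (inv_pos.2 hs) (h p hp t ht)
    rw [mul_add, inv_mul_cancel_left₀ hs.ne'] at this
    linarith

lemma minor (hr : 1 ≤ r) {F : Measure Y → EReal} (hbot : ∀ q, F q ≠ ⊥)
    (hconv : EConvexOn (Pr r y₀) F) (hlsc : LscWr1 r y₀ F)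
    {p₁ : Measure Y} (hp₁ : p₁ ∈ Pr r y₀) (hF₁ : F p₁ ≠ ⊤)
    {p₀ : Measure Y} (hp₀ : p₀ ∈ Pr r y₀) {c : ℝ} (hc : (c : EReal) < F p₀) :
    ∃ ψ : Y → ℝ, Gr r y₀ ψ ∧ c < ∫ x, ψ x ∂p₀ ∧
      ∀ p ∈ Pr r y₀, ∀ t : ℝ, F p ≤ t → ∫ x, ψ x ∂p ≤ t := by
  obtain ⟨c₁, hc₁⟩ : ∃ c₁ : ℝ, F p₁ = c₁ := ⟨_, (EReal.coe_toReal hF₁ (hbot _)).symm⟩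
  obtain ⟨ψ, hψ, s, hs, h0, h⟩ := sep hr hconv hlsc hp₁ hc₁.le hp₀ hc
  rcases hs.eq_or_lt with rfl | hs
  · obtain ⟨ψ₁, hψ₁, s₁, hs₁, h0₁, h₁⟩ := sep hr hconv hlsc hp₁ hc₁.le hp₁ (c := c₁ - 1)
      (by rw [hc₁]; exact_mod_cast sub_one_lt c₁)
    have hs₁' : 0 < s₁ := by
      have := h₁ p₁ hp₁ c₁ hc₁.le
      linarith
    obtain ⟨ψ₂, hψ₂, -, h₂⟩ := minor_of_pos hp₁ hψ₁ hs₁' h0₁ h₁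
    simp only [zero_mul, add_zero] at h0 h
    set b := ∫ x, ψ x ∂p₀ with hb
    set a := ∫ x, ψ₂ x ∂p₀ with ha
    set l : ℝ := (|c - a| + 1) / (-b) with hl
    have hl0 : 0 ≤ l := div_nonneg (by positivity) (by linarith)
    have hlb : l * (-b) = |c - a| + 1 := div_mul_cancel₀ _ (by linarith)
    have hint : ∀ p ∈ Pr r y₀, ∫ x, (ψ₂ x + (-l) * ψ x) ∂p = ∫ x, ψ₂ x ∂p - l * ∫ x, ψ x ∂p := by
      intro p hp
      rw [integral_add (hψ₂.integrable hp) ((hψ.mul _).integrable hp), integral_const_mul]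
      ring
    refine ⟨_, hψ₂.add (hψ.mul (-l)), ?_, fun p hp t ht => ?_⟩
    · rw [hint p₀ hp₀, ← hb, ← ha]
      linarith [le_abs_self (c - a)]
    · rw [hint p hp]
      have := h₂ p hp t ht
      have := mul_nonneg hl0 (h p hp t ht).le
      linarith
  · exact minor_of_pos hp₀ hψ hs h0 h

lemma moment_le (hr : 1 ≤ r) (p : Measure Y) :
    ∫⁻ x, ENNReal.ofReal (dist x y₀ ^ r) ∂p ≤ Wr r p (Measure.dirac y₀) ^ r := by
  have r0 : 0 < r := by linarith
  have : (∫⁻ x, ENNReal.ofReal (dist x y₀ ^ r) ∂p) ^ (1 / r) ≤ Wr r p (Measure.dirac y₀) := by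
    refine le_iInf₂ fun π hπ => ?_
    gcongr
    obtain ⟨h1, h2⟩ := hπ
    have hae : ∀ᵐ z ∂π, z.2 = y₀ := by
      have : ∀ᵐ y ∂(π.map Prod.snd), y = y₀ := by
        rw [h2, ae_dirac_eq]; simp
      exact ae_of_ae_map measurable_snd.aemeasurable this
    rw [← h1, lintegral_map (meas_dr r y₀).ennreal_ofReal measurable_fst]
    apply le_of_eq
    apply lintegral_congr_ae
    filter_upwards [hae] with z hz
    rw [hz]
  calc _ = ((∫⁻ x, ENNReal.ofReal (dist x y₀ ^ r) ∂p) ^ (1 / r)) ^ r := by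
        rw [← ENNReal.rpow_mul, one_div_mul_cancel r0.ne', ENNReal.rpow_one]
    _ ≤ _ := ENNReal.rpow_le_rpow this r0.le

lemma join_mem (hr : 1 ≤ r) {Q : Measure (Measure Y)} (hQ : Q ∈ PrP r y₀) :
    intensity Q ∈ Pr r y₀ := by
  obtain ⟨h1, h2, h3⟩ := hQ
  refine ⟨⟨?_⟩, ?_⟩
  · unfold intensity
    rw [Measure.join_apply MeasurableSet.univ]
    have : ∀ᵐ p ∂Q, p univ = 1 := by
      filter_upwards [h2] with p hp
      exact hp.1.measure_univ
    rw [lintegral_congr_ae this]; simp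
  · unfold FinMom intensity
    rw [Measure.lintegral_join (meas_dr r y₀).ennreal_ofReal.aemeasurable]
    exact (lintegral_mono fun p => moment_le hr p).trans_lt h3

lemma pointwise {f : EReal} (hf : f ≠ ⊥) {P N : ℝ≥0∞} (hP : P ≠ ⊤) (hN : N ≠ ⊤)
    (h : ∀ t : ℝ, f ≤ t → P.toReal - N.toReal ≤ t) :
    P + epos (-f) ≤ epos f + N ∧ epos (-f) ≤ N := by
  induction f with
  | bot => exact absurd rfl hf
  | top => simp [epos]
  | coe x =>
    have hx := h x le_rfl
    lift P to ℝ≥0 using hP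
    lift N to ℝ≥0 using hN
    simp only [ENNReal.coe_toReal] at hx
    have e1 : epos (x : EReal) = ENNReal.ofReal x := by simp [epos]
    have e2 : epos (-(x : EReal)) = ENNReal.ofReal (-x) := by
      rw [← EReal.coe_neg]; simp [epos]
    rw [e1, e2]
    unfold ENNReal.ofReal
    have key : P + (-x).toNNReal ≤ x.toNNReal + N := by
      rw [← NNReal.coe_le_coe]
      push_cast [Real.coe_toNNReal']
      rcases le_total 0 x with h0 | h0
      · rw [max_eq_right (by linarith), max_eq_left h0]; linarith
      · rw [max_eq_left (by linarith), max_eq_right h0]; linarith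
    have key2 : (-x).toNNReal ≤ N := by
      rw [Real.toNNReal_le_iff_le_coe]
      linarith [P.2]
    exact ⟨by exact_mod_cast key, by exact_mod_cast key2⟩

lemma eInt_ge (hr : 1 ≤ r) {F : Measure Y → EReal} (hbot : ∀ q, F q ≠ ⊥)
    {Q : Measure (Measure Y)} (hQ : Q ∈ PrP r y₀) {ψ : Y → ℝ} (hψ : Gr r y₀ ψ)
    (h : ∀ p ∈ Pr r y₀, ∀ t : ℝ, F p ≤ t → ∫ x, ψ x ∂p ≤ t) :
    ((∫ x, ψ x ∂(intensity Q) : ℝ) : EReal) ≤ eInt F Q := by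
  have hm1 : Measurable fun x => ENNReal.ofReal (ψ x) := hψ.1.ennreal_ofReal
  have hm2 : Measurable fun x => ENNReal.ofReal (-ψ x) := hψ.1.neg.ennreal_ofReal
  set P : Measure Y → ℝ≥0∞ := fun p => ∫⁻ x, ENNReal.ofReal (ψ x) ∂p with hP
  set N : Measure Y → ℝ≥0∞ := fun p => ∫⁻ x, ENNReal.ofReal (-ψ x) ∂p with hN
  have mP : Measurable P := Measure.measurable_lintegral hm1
  have mN : Measurable N := Measure.measurable_lintegral hm2
  have fP : ∀ p ∈ Pr r y₀, P p ≠ ⊤ := fun p hp =>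
    ((lintegral_ofReal_le_lintegral_enorm ψ).trans_lt (hψ.integrable hp).2).ne
  have fN : ∀ p ∈ Pr r y₀, N p ≠ ⊤ := fun p hp =>
    ((lintegral_ofReal_le_lintegral_enorm (fun x => -ψ x)).trans_lt (hψ.integrable hp).neg.2).ne
  have hint : ∀ p ∈ Pr r y₀, ∫ x, ψ x ∂p = (P p).toReal - (N p).toReal := fun p hp =>
    integral_eq_lintegral_pos_part_sub_lintegral_neg_part (hψ.integrable hp)
  have hI := join_mem hr hQ
  have jP : P (intensity Q) = ∫⁻ p, P p ∂Q := Measure.lintegral_join hm1.aemeasurable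
  have jN : N (intensity Q) = ∫⁻ p, N p ∂Q := Measure.lintegral_join hm2.aemeasurable
  have hpt : ∀ p ∈ Pr r y₀, P p + epos (-F p) ≤ epos (F p) + N p ∧ epos (-F p) ≤ N p :=
    fun p hp => pointwise (hbot p) (fP p hp) (fN p hp)
      (fun t ht => by rw [← hint p hp]; exact h p hp t ht)
  have k1 : ∫⁻ p, P p ∂Q + ∫⁻ p, epos (-F p) ∂Q ≤ ∫⁻ p, epos (F p) ∂Q + ∫⁻ p, N p ∂Q := by
    rw [← lintegral_add_left mP, ← lintegral_add_right _ mN]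
    apply lintegral_mono_ae
    filter_upwards [hQ.2.1] with p hp using (hpt p hp).1
  have k2 : ∫⁻ p, epos (-F p) ∂Q ≤ ∫⁻ p, N p ∂Q := by
    apply lintegral_mono_ae
    filter_upwards [hQ.2.1] with p hp using (hpt p hp).2
  rw [hint _ hI]
  unfold eInt
  have fP' := fP _ hI
  have fN' := fN _ hI
  rw [← jP] at k1
  rw [← jN] at k1 k2
  generalize P (intensity Q) = a at *
  generalize N (intensity Q) = b at *
  have fd := (k2.trans_lt fN'.lt_top).ne
  generalize ∫⁻ p, epos (-F p) ∂Q = d at *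
  generalize ∫⁻ p, epos (F p) ∂Q = c at *
  lift a to ℝ≥0 using fP'
  lift b to ℝ≥0 using fN'
  lift d to ℝ≥0 using fd
  induction c with
  | top =>
    have : (((⊤ : ℝ≥0∞) : EReal) - ((d : ℝ≥0∞) : EReal)) = ⊤ := by
      rw [EReal.coe_ennreal_top]
      exact EReal.top_sub_coe (d : ℝ)
    rw [this]; exact le_top
  | coe c =>
    have k3 : (a : ℝ) + d ≤ c + b := by exact_mod_cast k1
    have : (((c : ℝ≥0∞) : EReal) - ((d : ℝ≥0∞) : EReal)) = ((c - d : ℝ) : EReal) := by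
      rw [EReal.coe_sub]; rfl
    rw [this]
    simp only [ENNReal.coe_toReal]
    exact_mod_cast (by linarith : (a : ℝ) - b ≤ c - d)

end
end Jen

/-- Jensen's inequality for convex lower semicontinuous functionals on
`𝒫_r(Y)` (Lemma `lem:Jensen` (a)). -/
theorem statement12 {Y : Type*}
    [MeasurableSpace Y] [MetricSpace Y] [CompleteSpace Y] [SecondCountableTopology Y]
    [BorelSpace Y]
    (r : ℝ) (hr : 1 ≤ r) (y₀ : Y)
    (F : Measure Y → EReal) (hbot : ∀ q, F q ≠ ⊥)
    (hconv : EConvexOn (Pr r y₀) F) (hlsc : LscWr1 r y₀ F) :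
    ∀ Q ∈ PrP r y₀, F (intensity Q) ≤ eInt F Q := by
  intro Q hQ
  have hI := Jen.join_mem hr hQ
  by_cases hfin : ∃ p₁ ∈ Pr r y₀, F p₁ ≠ ⊤
  · obtain ⟨p₁, hp₁, hF₁⟩ := hfin
    by_contra! hlt'
    obtain ⟨z, hz1, hz⟩ := EReal.lt_iff_exists_real_btwn.1 hlt'
    refine absurd hz1 (not_lt.2 ?_)
    obtain ⟨ψ, hψ, hlt, hle⟩ := Jen.minor hr hbot hconv hlsc hp₁ hF₁ hI hz
    exact le_trans (by exact_mod_cast hlt.le) (Jen.eInt_ge hr hbot hQ hψ hle)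
  · push Not at hfin
    have := hQ.1
    have h1 : ∫⁻ p, epos (F p) ∂Q = ⊤ := by
      have : ∀ᵐ p ∂Q, epos (F p) = ⊤ := by
        filter_upwards [hQ.2.1] with p hp
        simp [hfin p hp, epos]
      rw [lintegral_congr_ae this]; simp
    have h2 : ∫⁻ p, epos (-F p) ∂Q = 0 := by
      have : ∀ᵐ p ∂Q, epos (-F p) = 0 := by
        filter_upwards [hQ.2.1] with p hp
        simp [hfin p hp, epos]
      rw [lintegral_congr_ae this]; simp
    unfold eInt
    rw [h1, h2]
    simp
end
end

section
/- Let 𝒴 be a Polish space, r ∈ [1,∞), and let F : 𝒫_r(𝒴) → ℝ ∪ {+∞} be convex, upper semicontinuous (with respect to 𝒲_r), and bounded above by a multiple of p ↦ 𝒲_r(p,p₀)^r for some fixed p₀ ∈ 𝒫_r(𝒴). Then F(I(Q)) ≤ ∫ F(q) Q(dq) for every Q ∈ 𝒫_r(𝒫_r(𝒴)). -/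
open MeasureTheory Set Filter
open scoped ENNReal NNReal Topology RealInnerProductSpace

noncomputable section

open WOT

namespace JensenAux

open ProbabilityTheory

lemma couplings_add {Y : Type*} [MeasurableSpace Y] {p q p' q' : Measure Y}
    {π π' : Measure (Y × Y)} (h : π ∈ Couplings p q) (h' : π' ∈ Couplings p' q') :
    π + π' ∈ Couplings (p + p') (q + q') := by
  constructor
  · rw [Measure.map_add _ _ measurable_fst, h.1, h'.1]
  · rw [Measure.map_add _ _ measurable_snd, h.2, h'.2]

lemma couplings_sum {Y ι : Type*} [MeasurableSpace Y] (s : Finset ι) {p q : ι → Measure Y}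
    {π : ι → Measure (Y × Y)} (h : ∀ i ∈ s, π i ∈ Couplings (p i) (q i)) :
    ∑ i ∈ s, π i ∈ Couplings (∑ i ∈ s, p i) (∑ i ∈ s, q i) := by
  classical
  induction s using Finset.induction_on with
  | empty => simp [Couplings]
  | insert a s ha ih =>
    rw [Finset.sum_insert ha, Finset.sum_insert ha, Finset.sum_insert ha]
    exact couplings_add (h a (by simp)) (ih fun i hi => h i (by simp [hi]))

lemma couplings_prod {Y : Type*} [MeasurableSpace Y] (p q : Measure Y)
    [IsFiniteMeasure p] [IsFiniteMeasure q] (h : p univ = q univ) :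
    (p univ)⁻¹ • p.prod q ∈ Couplings p q := by
  by_cases h0 : p univ = 0
  · have hp : p = 0 := Measure.measure_univ_eq_zero.1 h0
    have hq : q = 0 := Measure.measure_univ_eq_zero.1 (h ▸ h0)
    subst hp hq
    simp [Couplings]
  · have ht : p univ ≠ ⊤ := measure_ne_top _ _
    constructor
    · rw [Measure.map_smul, Measure.map_fst_prod, ← h, smul_smul,
        ENNReal.inv_mul_cancel h0 ht, one_smul]
    · rw [Measure.map_smul, Measure.map_snd_prod, smul_smul,
        ENNReal.inv_mul_cancel h0 ht, one_smul]

lemma dist_bound {Y : Type*} [PseudoMetricSpace Y] {r : ℝ} (hr : 1 ≤ r) (y₀ x y : Y) :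
    ENNReal.ofReal (dist x y ^ r) ≤ ENNReal.ofReal (2 ^ r) *
      (ENNReal.ofReal (dist x y₀ ^ r) + ENNReal.ofReal (dist y y₀ ^ r)) := by
  rw [← ENNReal.ofReal_add (by positivity) (by positivity), ← ENNReal.ofReal_mul (by positivity)]
  apply ENNReal.ofReal_le_ofReal
  have h1 : dist x y ≤ 2 * max (dist x y₀) (dist y y₀) := by
    have := dist_triangle_right x y y₀
    have := le_max_left (dist x y₀) (dist y y₀)
    have := le_max_right (dist x y₀) (dist y y₀)
    linarith
  have hm : 0 ≤ max (dist x y₀) (dist y y₀) := le_max_of_le_left dist_nonneg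
  calc dist x y ^ r ≤ (2 * max (dist x y₀) (dist y y₀)) ^ r :=
        Real.rpow_le_rpow dist_nonneg h1 (by linarith)
    _ = 2 ^ r * max (dist x y₀) (dist y y₀) ^ r := Real.mul_rpow (by norm_num) hm
    _ ≤ _ := by
        gcongr
        have h2 : 0 ≤ dist x y₀ ^ r := by positivity
        have h3 : 0 ≤ dist y y₀ ^ r := by positivity
        rcases max_cases (dist x y₀) (dist y y₀) with h | h <;> rw [h.1] <;> linarith

section
set_option linter.unusedSectionVars false
variable {Y : Type*} [MeasurableSpace Y] [MetricSpace Y] [SecondCountableTopology Y] [BorelSpace Y]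

lemma measD {r : ℝ} (y₀ : Y) : Measurable fun y : Y => ENNReal.ofReal (dist y y₀ ^ r) := by
  fun_prop

lemma measDD {r : ℝ} : Measurable fun z : Y × Y => ENNReal.ofReal (dist z.1 z.2 ^ r) := by
  fun_prop

lemma Wr_le {r : ℝ} (hr : 1 ≤ r) {p q : Measure Y} {π : Measure (Y × Y)}
    (h : π ∈ Couplings p q) {e : ℝ≥0∞}
    (hc : ∫⁻ z : Y × Y, ENNReal.ofReal (dist z.1 z.2 ^ r) ∂π ≤ e) : Wr r p q ≤ e ^ (1 / r) := by
  unfold Wr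
  refine (iInf₂_le π h).trans ?_
  exact ENNReal.rpow_le_rpow hc (by positivity)

lemma rest_cost {r : ℝ} (hr : 1 ≤ r) (y₀ : Y) (p q : Measure Y)
    [IsFiniteMeasure p] [IsFiniteMeasure q] (h : p univ = q univ) :
    ∫⁻ z : Y × Y, ENNReal.ofReal (dist z.1 z.2 ^ r) ∂((p univ)⁻¹ • p.prod q) ≤
      ENNReal.ofReal (2 ^ r) * (∫⁻ y, ENNReal.ofReal (dist y y₀ ^ r) ∂p +
        ∫⁻ y, ENNReal.ofReal (dist y y₀ ^ r) ∂q) := by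
  rw [lintegral_smul_measure]
  have h1 : ∫⁻ z : Y × Y, ENNReal.ofReal (dist z.1 z.2 ^ r) ∂(p.prod q) ≤
      ENNReal.ofReal (2 ^ r) * (p univ * (∫⁻ y, ENNReal.ofReal (dist y y₀ ^ r) ∂p +
        ∫⁻ y, ENNReal.ofReal (dist y y₀ ^ r) ∂q)) := by
    calc _ ≤ ∫⁻ z : Y × Y, ENNReal.ofReal (2 ^ r) *
            (ENNReal.ofReal (dist z.1 y₀ ^ r) + ENNReal.ofReal (dist z.2 y₀ ^ r)) ∂(p.prod q) :=
          lintegral_mono fun z => dist_bound hr y₀ _ _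
      _ = _ := by
          rw [lintegral_const_mul _ (by fun_prop), lintegral_add_left (by fun_prop)]
          congr 1
          have e1 := lintegral_prod_mul (μ := p) (ν := q)
            (f := fun y => ENNReal.ofReal (dist y y₀ ^ r)) (g := fun _ => 1)
            (measD y₀).aemeasurable aemeasurable_const
          have e2 := lintegral_prod_mul (μ := p) (ν := q)
            (g := fun y => ENNReal.ofReal (dist y y₀ ^ r)) (f := fun _ => 1)
            aemeasurable_const (measD y₀).aemeasurable
          simp only [mul_one, one_mul, lintegral_const] at e1 e2
          rw [e1, e2, ← h]
          ring
  by_cases h0 : p univ = 0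
  · have : ∫⁻ z : Y × Y, ENNReal.ofReal (dist z.1 z.2 ^ r) ∂(p.prod q) = 0 := by
      rw [Measure.measure_univ_eq_zero.1 h0]; simp
    rw [this]; simp
  · calc _ ≤ (p univ)⁻¹ * (ENNReal.ofReal (2 ^ r) * (p univ *
          (∫⁻ y, ENNReal.ofReal (dist y y₀ ^ r) ∂p +
        ∫⁻ y, ENNReal.ofReal (dist y y₀ ^ r) ∂q))) := by
          rw [smul_eq_mul]; gcongr
      _ = ((p univ)⁻¹ * p univ) * (ENNReal.ofReal (2 ^ r) *
          (∫⁻ y, ENNReal.ofReal (dist y y₀ ^ r) ∂p +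
        ∫⁻ y, ENNReal.ofReal (dist y y₀ ^ r) ∂q)) := by ring
      _ = _ := by rw [ENNReal.inv_mul_cancel h0 (measure_ne_top _ _), one_mul]

lemma cell_cost {r : ℝ} (hr : 1 ≤ r) (p q : Measure Y) {B : Set Y}
    (hB : MeasurableSet B) {δ : ℝ} (hδ : ∀ x ∈ B, ∀ y ∈ B, dist x y ≤ δ)
    [IsFiniteMeasure p] [IsFiniteMeasure q] (hp : p Bᶜ = 0) (hq : q Bᶜ = 0)
    (h : p univ = q univ) :
    ∫⁻ z : Y × Y, ENNReal.ofReal (dist z.1 z.2 ^ r) ∂((p univ)⁻¹ • p.prod q) ≤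
      ENNReal.ofReal (δ ^ r) * p univ := by
  rw [lintegral_smul_measure, lintegral_prod _ (by fun_prop)]
  have h1 : ∫⁻ x, ∫⁻ y, ENNReal.ofReal (dist x y ^ r) ∂q ∂p ≤
      ENNReal.ofReal (δ ^ r) * q univ * p univ := by
    rw [← lintegral_const]
    apply lintegral_mono_ae
    have hp' : ∀ᵐ x ∂p, x ∈ B := hp
    have hq' : ∀ᵐ x ∂q, x ∈ B := hq
    filter_upwards [hp'] with x hx
    rw [← lintegral_const]
    apply lintegral_mono_ae
    filter_upwards [hq'] with y hy
    exact ENNReal.ofReal_le_ofReal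
      (Real.rpow_le_rpow dist_nonneg (hδ x hx y hy) (by linarith))
  by_cases h0 : p univ = 0
  · rw [Measure.measure_univ_eq_zero.1 h0]; simp
  · calc _ ≤ (p univ)⁻¹ * (ENNReal.ofReal (δ ^ r) * q univ * p univ) := by
          rw [smul_eq_mul]; gcongr
      _ = ((p univ)⁻¹ * p univ) * (ENNReal.ofReal (δ ^ r) * p univ) := by rw [← h]; ring
      _ = _ := by rw [ENNReal.inv_mul_cancel h0 (measure_ne_top _ _), one_mul]

/-- The tail set of a sequence of sets. -/
def tail (B : ℕ → Set Y) (m : ℕ) : Set Y := (⋃ j ∈ Finset.range m, B j)ᶜ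

lemma decomp (p : Measure Y) (B : ℕ → Set Y) (hB : ∀ j, MeasurableSet (B j))
    (hd : Pairwise (Function.onFun Disjoint B)) (m : ℕ) (a : ℕ → ℝ≥0∞) (ha : ∀ j, a j ≤ 1) :
    p = (∑ j ∈ Finset.range m, a j • p.restrict (B j)) +
      ((∑ j ∈ Finset.range m, (1 - a j) • p.restrict (B j)) + p.restrict (tail B m)) := by
  rw [← add_assoc, ← Finset.sum_add_distrib]
  have : ∀ j ∈ Finset.range m, a j • p.restrict (B j) + (1 - a j) • p.restrict (B j)
      = p.restrict (B j) := by
    intro j _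
    rw [← add_smul, add_tsub_cancel_of_le (ha j), one_smul]
  rw [Finset.sum_congr rfl this]
  have h2 : p.restrict (⋃ j ∈ Finset.range m, B j) = ∑ j ∈ Finset.range m, p.restrict (B j) := by
    ext s hs
    rw [Measure.restrict_apply hs, Measure.finsetSum_apply, inter_iUnion₂]
    rw [measure_biUnion_finset]
    · exact Finset.sum_congr rfl fun j _ => (Measure.restrict_apply hs).symm
    · intro i _ j _ hij
      exact (hd hij).mono inter_subset_right inter_subset_right
    · exact fun j _ => hs.inter (hB j)
  rw [← h2]
  exact (Measure.restrict_add_restrict_compl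
    (Finset.measurableSet_biUnion _ fun j _ => hB j)).symm

lemma lint_rest (p : Measure Y) (B : ℕ → Set Y) (m : ℕ) (a : ℕ → ℝ≥0∞) (f : Y → ℝ≥0∞) :
    ∫⁻ y, f y ∂((∑ j ∈ Finset.range m, (1 - a j) • p.restrict (B j)) + p.restrict (tail B m)) =
    ∑ j ∈ Finset.range m, (1 - a j) * ∫⁻ y in B j, f y ∂p + ∫⁻ y in tail B m, f y ∂p := by
  rw [lintegral_add_measure, lintegral_finsetSum_measure]
  simp only [lintegral_smul_measure, smul_eq_mul]

lemma exists_coupling {r : ℝ} (hr : 1 ≤ r) (y₀ : Y) (p q : Measure Y)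
    [IsProbabilityMeasure p] [IsProbabilityMeasure q]
    (B : ℕ → Set Y) (hB : ∀ j, MeasurableSet (B j))
    (hd : Pairwise (Function.onFun Disjoint B)) {δ : ℝ}
    (hδ : ∀ j, ∀ x ∈ B j, ∀ y ∈ B j, dist x y ≤ δ) (m : ℕ) :
    Wr r p q ≤ (ENNReal.ofReal (δ ^ r) + ENNReal.ofReal (2 ^ r) *
      ((∑ j ∈ Finset.range m, (1 - min (p (B j)) (q (B j)) / p (B j)) *
          ∫⁻ y in B j, ENNReal.ofReal (dist y y₀ ^ r) ∂p +
            ∫⁻ y in tail B m, ENNReal.ofReal (dist y y₀ ^ r) ∂p) +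
       (∑ j ∈ Finset.range m, (1 - min (p (B j)) (q (B j)) / q (B j)) *
          ∫⁻ y in B j, ENNReal.ofReal (dist y y₀ ^ r) ∂q +
            ∫⁻ y in tail B m, ENNReal.ofReal (dist y y₀ ^ r) ∂q))) ^ (1 / r) := by
  set c : ℕ → ℝ≥0∞ := fun j => min (p (B j)) (q (B j)) with hc
  set a : ℕ → ℝ≥0∞ := fun j => c j / p (B j) with ha
  set b : ℕ → ℝ≥0∞ := fun j => c j / q (B j) with hb
  have ha1 : ∀ j, a j ≤ 1 := fun j => ENNReal.div_le_of_le_mul (by simp [hc])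
  have hb1 : ∀ j, b j ≤ 1 := fun j => ENNReal.div_le_of_le_mul (by simp [hc])
  have hac : ∀ j, a j * p (B j) = c j := by
    intro j
    refine ENNReal.div_mul_cancel' (fun h => ?_) (fun h => absurd h (measure_ne_top _ _))
    simp [hc, h]
  have hbc : ∀ j, b j * q (B j) = c j := by
    intro j
    refine ENNReal.div_mul_cancel' (fun h => ?_) (fun h => absurd h (measure_ne_top _ _))
    simp [hc, h]
  have hat : ∀ j, a j ≠ ⊤ := fun j => ((ha1 j).trans_lt ENNReal.one_lt_top).ne
  have hbt : ∀ j, b j ≠ ⊤ := fun j => ((hb1 j).trans_lt ENNReal.one_lt_top).ne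
  set p' := (∑ j ∈ Finset.range m, (1 - a j) • p.restrict (B j)) + p.restrict (tail B m) with hp'
  set q' := (∑ j ∈ Finset.range m, (1 - b j) • q.restrict (B j)) + q.restrict (tail B m) with hq'
  have dp := decomp p B hB hd m a ha1
  have dq := decomp q B hB hd m b hb1
  rw [← hp'] at dp
  rw [← hq'] at dq
  have hpa : ∀ j, (a j • p.restrict (B j)) univ = c j := by
    intro j; simp [hac]
  have hqb : ∀ j, (b j • q.restrict (B j)) univ = c j := by
    intro j; simp [hbc]
  have fa : ∀ j, IsFiniteMeasure (a j • p.restrict (B j)) := fun j =>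
    ⟨by rw [hpa]; exact (min_le_left _ _).trans_lt (measure_lt_top _ _)⟩
  have fb : ∀ j, IsFiniteMeasure (b j • q.restrict (B j)) := fun j =>
    ⟨by rw [hqb]; exact (min_le_left _ _).trans_lt (measure_lt_top _ _)⟩
  have mp : ∑ j ∈ Finset.range m, c j + p' univ = 1 := by
    have := congrArg (fun μ : Measure Y => μ univ) dp
    simp only [measure_univ, Measure.add_apply, Measure.finsetSum_apply, hpa] at this
    exact this.symm
  have mq : ∑ j ∈ Finset.range m, c j + q' univ = 1 := by
    have := congrArg (fun μ : Measure Y => μ univ) dq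
    simp only [measure_univ, Measure.add_apply, Measure.finsetSum_apply, hqb] at this
    exact this.symm
  have hs1 : ∑ j ∈ Finset.range m, c j ≤ 1 := by rw [← mp]; exact le_self_add
  have hst : ∑ j ∈ Finset.range m, c j ≠ ⊤ := (hs1.trans_lt ENNReal.one_lt_top).ne
  have hm : p' univ = q' univ := (ENNReal.add_right_inj hst).1 (mp.trans mq.symm)
  have fp : IsFiniteMeasure p' :=
    ⟨lt_of_le_of_lt (by rw [← mp]; exact le_add_self) ENNReal.one_lt_top⟩
  have fq : IsFiniteMeasure q' := ⟨by rw [← hm]; exact measure_lt_top _ _⟩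
  have hcoup := couplings_add (couplings_sum (Finset.range m) fun j _ =>
    couplings_prod (a j • p.restrict (B j)) (b j • q.restrict (B j)) ((hpa j).trans (hqb j).symm))
    (couplings_prod p' q' hm)
  rw [← dp, ← dq] at hcoup
  refine Wr_le hr hcoup ?_
  rw [lintegral_add_measure, lintegral_finsetSum_measure]
  refine add_le_add ?_ ?_
  · calc _ ≤ ∑ j ∈ Finset.range m, ENNReal.ofReal (δ ^ r) * c j := by
          refine Finset.sum_le_sum fun j _ => ?_
          rw [← hpa j]
          refine cell_cost hr _ _ (hB j) (hδ j) ?_ ?_ ((hpa j).trans (hqb j).symm)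
          · simp [Measure.restrict_apply (hB j).compl]
          · simp [Measure.restrict_apply (hB j).compl]
      _ = ENNReal.ofReal (δ ^ r) * ∑ j ∈ Finset.range m, c j := by rw [Finset.mul_sum]
      _ ≤ ENNReal.ofReal (δ ^ r) * 1 := by gcongr
      _ = _ := mul_one _
  · refine (rest_cost hr y₀ p' q' hm).trans ?_
    rw [hp', hq', lint_rest, lint_rest]

lemma tendsto_aux {p D : ℕ → ℝ≥0∞} {q d : ℝ≥0∞} (hq : q ≠ ⊤) (hd : d ≠ ⊤)
    (h0 : q = 0 → d = 0) (hp : Tendsto p atTop (𝓝 q)) (hD : Tendsto D atTop (𝓝 d))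
    {s : ℕ → ℝ≥0∞} (hs : Tendsto s atTop (𝓝 q)) :
    Tendsto (fun n => (1 - min (p n) q / s n) * D n) atTop (𝓝 0) := by
  by_cases h : q = 0
  · rw [h0 h] at hD
    refine tendsto_of_tendsto_of_tendsto_of_le_of_le tendsto_const_nhds hD
      (fun _ => bot_le) (fun n => ?_)
    calc _ ≤ 1 * D n := by gcongr; exact tsub_le_self
      _ = _ := one_mul _
  · have h1 : Tendsto (fun n => min (p n) q / s n) atTop (𝓝 (min q q / q)) :=
      ENNReal.Tendsto.div (hp.min tendsto_const_nhds) (Or.inr h) hs (Or.inl hq)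
    rw [min_self, ENNReal.div_self h hq] at h1
    have h2 := ENNReal.Tendsto.sub (tendsto_const_nhds (x := (1 : ℝ≥0∞))) h1 (Or.inl ENNReal.one_ne_top)
    have h3 := ENNReal.Tendsto.mul h2 (Or.inr hd) hD (Or.inr (by simp))
    simpa using h3

lemma Wr_tendsto {r : ℝ} (hr : 1 ≤ r) (y₀ : Y) (ps : ℕ → Measure Y) (q : Measure Y)
    (hps : ∀ n, IsProbabilityMeasure (ps n)) (hq : q ∈ Pr r y₀)
    (B : ℕ → ℕ → Set Y) (hB : ∀ k j, MeasurableSet (B k j))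
    (hd : ∀ k, Pairwise (Function.onFun Disjoint (B k))) (hU : ∀ k, ⋃ j, B k j = univ)
    (δ : ℕ → ℝ) (hδ0 : Tendsto δ atTop (𝓝 0))
    (hδ : ∀ k j, ∀ x ∈ B k j, ∀ y ∈ B k j, dist x y ≤ δ k)
    (h1 : ∀ k j, Tendsto (fun n => ps n (B k j)) atTop (𝓝 (q (B k j))))
    (h2 : ∀ k j, Tendsto (fun n => ∫⁻ y in B k j, ENNReal.ofReal (dist y y₀ ^ r) ∂(ps n)) atTop
      (𝓝 (∫⁻ y in B k j, ENNReal.ofReal (dist y y₀ ^ r) ∂q)))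
    (h3 : ∀ k m, Tendsto (fun n => ∫⁻ y in tail (B k) m, ENNReal.ofReal (dist y y₀ ^ r) ∂(ps n))
      atTop (𝓝 (∫⁻ y in tail (B k) m, ENNReal.ofReal (dist y y₀ ^ r) ∂q))) :
    WrTendsto r ps q := by
  have hqp := hq.1
  have hqm : ∫⁻ y, ENNReal.ofReal (dist y y₀ ^ r) ∂q ≠ ⊤ := ne_of_lt hq.2
  have r0 : 0 < r := by linarith
  unfold WrTendsto
  rw [ENNReal.tendsto_nhds_zero]
  intro e he
  have her : 0 < e ^ r := ENNReal.rpow_pos_of_nonneg he r0.le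
  -- choice of scale
  have hk : Tendsto (fun k => ENNReal.ofReal (δ k ^ r)) atTop (𝓝 0) := by
    have : Tendsto (fun k => δ k ^ r) atTop (𝓝 (0 ^ r)) :=
      hδ0.rpow_const (Or.inr r0.le)
    rw [Real.zero_rpow r0.ne'] at this
    simpa using ENNReal.tendsto_ofReal this
  obtain ⟨k, hk⟩ := (hk.eventually (gt_mem_nhds (ENNReal.half_pos her.ne'))).exists
  have hT : Tendsto (fun m => q (tail (B k) m)) atTop (𝓝 0) := by
    have hanti : Antitone (tail (B k)) := by
      intro m m' hm
      refine compl_subset_compl.2 (biUnion_subset_biUnion_left ?_)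
      intro j hj
      simp only [Finset.coe_range, mem_Iio, Finset.mem_range, SetLike.mem_coe] at hj ⊢
      exact lt_of_lt_of_le (by simpa using hj) hm
    have := tendsto_measure_iInter_atTop (μ := q) (s := tail (B k))
      (fun m => ((Finset.measurableSet_biUnion _ fun j _ => hB k j).compl).nullMeasurableSet)
      hanti ⟨0, measure_ne_top _ _⟩
    have he : ⋂ m, tail (B k) m = ∅ := by
      rw [eq_empty_iff_forall_notMem]
      intro x hx
      have : x ∈ ⋃ j, B k j := by rw [hU]; trivial
      obtain ⟨j, hj⟩ := mem_iUnion.1 this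
      have h := mem_iInter.1 hx (j + 1)
      exact h (mem_iUnion₂.2 ⟨j, by simp, hj⟩)
    rw [he, measure_empty] at this
    exact this
  have hT2 := tendsto_setLIntegral_zero hqm hT
  have hT3 : Tendsto (fun m => ENNReal.ofReal (2 ^ r) *
      (∫⁻ y in tail (B k) m, ENNReal.ofReal (dist y y₀ ^ r) ∂q +
        ∫⁻ y in tail (B k) m, ENNReal.ofReal (dist y y₀ ^ r) ∂q)) atTop (𝓝 0) := by
    have := ENNReal.Tendsto.const_mul (a := ENNReal.ofReal (2 ^ r)) (hT2.add hT2)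
      (Or.inr ENNReal.ofReal_ne_top)
    simpa using this
  obtain ⟨m, hm⟩ := (hT3.eventually (gt_mem_nhds (ENNReal.half_pos her.ne'))).exists
  have hfin : ∀ j, ∫⁻ y in B k j, ENNReal.ofReal (dist y y₀ ^ r) ∂q ≠ ⊤ := fun j =>
    ((setLIntegral_le_lintegral _ _).trans_lt hq.2).ne
  have hz : ∀ j, q (B k j) = 0 → ∫⁻ y in B k j, ENNReal.ofReal (dist y y₀ ^ r) ∂q = 0 :=
    fun j hj => setLIntegral_measure_zero _ _ hj
  have l1 : Tendsto (fun n => ∑ j ∈ Finset.range m,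
      (1 - min (ps n (B k j)) (q (B k j)) / ps n (B k j)) *
          ∫⁻ y in B k j, ENNReal.ofReal (dist y y₀ ^ r) ∂(ps n)) atTop
      (𝓝 (∑ j ∈ Finset.range m, 0)) :=
    tendsto_finsetSum _ fun j _ => tendsto_aux (measure_ne_top _ _) (hfin j) (hz j) (h1 k j)
      (h2 k j) (h1 k j)
  have l2 : Tendsto (fun n => ∑ j ∈ Finset.range m,
      (1 - min (ps n (B k j)) (q (B k j)) / q (B k j)) *
          ∫⁻ y in B k j, ENNReal.ofReal (dist y y₀ ^ r) ∂q) atTop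
      (𝓝 (∑ j ∈ Finset.range m, 0)) :=
    tendsto_finsetSum _ fun j _ => tendsto_aux (measure_ne_top _ _) (hfin j) (hz j) (h1 k j)
      tendsto_const_nhds tendsto_const_nhds
  have l3 := ENNReal.Tendsto.const_mul (a := ENNReal.ofReal (2 ^ r))
    ((l1.add (h3 k m)).add (l2.add (tendsto_const_nhds
      (x := ∫⁻ y in tail (B k) m, ENNReal.ofReal (dist y y₀ ^ r) ∂q))))
      (Or.inr ENNReal.ofReal_ne_top)
  have l4 := (tendsto_const_nhds (x := ENNReal.ofReal (δ k ^ r))).add l3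
  have hlt : ENNReal.ofReal (δ k ^ r) + ENNReal.ofReal (2 ^ r) *
    ((∑ j ∈ Finset.range m, 0 + ∫⁻ y in tail (B k) m, ENNReal.ofReal (dist y y₀ ^ r) ∂q) +
     (∑ j ∈ Finset.range m, 0 + ∫⁻ y in tail (B k) m, ENNReal.ofReal (dist y y₀ ^ r) ∂q))
      < e ^ r := by
    rw [Finset.sum_const_zero, zero_add, ← ENNReal.add_halves (e ^ r)]
    exact ENNReal.add_lt_add hk hm
  filter_upwards [l4.eventually (gt_mem_nhds hlt)] with n hn
  have := hps n
  refine (exists_coupling hr y₀ (ps n) q (B k) (hB k) (hd k) (hδ k) m).trans ?_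
  calc _ ≤ (e ^ r) ^ (1 / r) := ENNReal.rpow_le_rpow hn.le (by positivity)
    _ = e := by rw [← ENNReal.rpow_mul, mul_one_div_cancel r0.ne', ENNReal.rpow_one]

lemma exists_partition (y₀ : Y) : ∃ (B : ℕ → ℕ → Set Y) (δ : ℕ → ℝ),
    (∀ k j, MeasurableSet (B k j)) ∧ (∀ k, Pairwise (Function.onFun Disjoint (B k))) ∧
    (∀ k, ⋃ j, B k j = univ) ∧ Tendsto δ atTop (𝓝 0) ∧
    (∀ k j, ∀ x ∈ B k j, ∀ y ∈ B k j, dist x y ≤ δ k) := by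
  have : Nonempty Y := ⟨y₀⟩
  refine ⟨fun k => disjointed fun j =>
    Metric.closedBall (TopologicalSpace.denseSeq Y j) (1 / ((k : ℝ) + 1)),
    fun k => 2 * (1 / ((k : ℝ) + 1)), ?_, ?_, ?_, ?_, ?_⟩
  · intro k j
    exact MeasurableSet.disjointed (fun j => Metric.isClosed_closedBall.measurableSet) j
  · intro k
    exact disjoint_disjointed _
  · intro k
    rw [iUnion_disjointed, eq_univ_iff_forall]
    intro x
    obtain ⟨j, hj⟩ := (TopologicalSpace.denseRange_denseSeq Y).exists_dist_lt x
      (ε := 1 / ((k : ℝ) + 1)) (by positivity)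
    exact mem_iUnion.2 ⟨j, Metric.mem_closedBall.2 hj.le⟩
  · simpa using tendsto_one_div_add_atTop_nhds_zero_nat.const_mul (2 : ℝ)
  · intro k j x hx y hy
    have hx' : x ∈ Metric.closedBall (TopologicalSpace.denseSeq Y j) (1 / ((k : ℝ) + 1)) :=
      disjointed_subset (fun j =>
        Metric.closedBall (TopologicalSpace.denseSeq Y j) (1 / ((k : ℝ) + 1))) j hx
    have hy' : y ∈ Metric.closedBall (TopologicalSpace.denseSeq Y j) (1 / ((k : ℝ) + 1)) :=
      disjointed_subset (fun j =>
        Metric.closedBall (TopologicalSpace.denseSeq Y j) (1 / ((k : ℝ) + 1))) j hy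
    rw [Metric.mem_closedBall] at hx' hy'
    have := dist_triangle_right x y (TopologicalSpace.denseSeq Y j)
    linarith

end
/-- The average of `Q` over the cell `A`. -/
def avg {Y : Type*} [MeasurableSpace Y] (Q : Measure (Measure Y)) (A : Set (Measure Y)) :
    Measure Y := (Q[|A]).join

lemma lint_avg {Y : Type*} [MeasurableSpace Y] (Q : Measure (Measure Y)) (A : Set (Measure Y))
    {g : Y → ℝ≥0∞} (hg : Measurable g) :
    ∫⁻ y, g y ∂(avg Q A) = ∫⁻ q, ∫⁻ y, g y ∂q ∂(Q[|A]) :=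
  Measure.lintegral_join hg.aemeasurable

lemma exists_cells {Y J : Type*} [MeasurableSpace Y] [Countable J] [Nonempty J]
    (Q : Measure (Measure Y)) [IsProbabilityMeasure Q]
    (g : J → Y → ℝ≥0∞) (hg : ∀ i, Measurable (g i)) :
    ∃ c : ∀ n : ℕ, Measure Y → (Fin n → Prop), (∀ n, Measurable (c n)) ∧
      ∀ᵐ q ∂Q, (∀ n, Q (c n ⁻¹' {c n q}) ≠ 0) ∧
        ∀ i, Tendsto (fun n => ∫⁻ y, g i y ∂(avg Q (c n ⁻¹' {c n q}))) atTop
          (𝓝 (∫⁻ y, g i y ∂q)) := by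
  obtain ⟨e, he⟩ := exists_surjective_nat (J × ℕ)
  set t := TopologicalSpace.denseSeq ℝ≥0∞ with ht
  set c : ∀ n : ℕ, Measure Y → (Fin n → Prop) := fun n q k =>
    t (e k).2 < ∫⁻ y, g (e k).1 y ∂q with hc
  have hcm : ∀ n, Measurable (c n) := by
    intro n
    refine measurable_pi_iff.2 fun k => ?_
    exact measurableSet_setOfPred.1
      (measurableSet_lt measurable_const (Measure.measurable_lintegral (hg _)))
  refine ⟨c, hcm, ?_⟩
  have h1 : ∀ᵐ q ∂Q, ∀ n, Q (c n ⁻¹' {c n q}) ≠ 0 := by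
    rw [ae_all_iff]
    intro n
    have : ∀ a : Fin n → Prop, ∀ᵐ q ∂Q, c n q = a → Q (c n ⁻¹' {a}) ≠ 0 := by
      intro a
      by_cases h : Q (c n ⁻¹' {a}) = 0
      · have h' : ∀ᵐ q ∂Q, q ∉ c n ⁻¹' {a} := measure_eq_zero_iff_ae_notMem.1 h
        filter_upwards [h'] with q hq hqa
        exact absurd hqa hq
      · exact Eventually.of_forall fun _ _ => h
    filter_upwards [ae_all_iff.2 this] with q hq
    exact hq _ rfl
  filter_upwards [h1] with q hq
  refine ⟨hq, fun i => ?_⟩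
  have hcell : ∀ n, MeasurableSet (c n ⁻¹' {c n q}) := fun n =>
    hcm n (MeasurableSet.singleton _)
  have hpr : ∀ n, IsProbabilityMeasure (Q[|c n ⁻¹' {c n q}]) := fun n =>
    cond_isProbabilityMeasure (hq n)
  have hmem : ∀ n, ∀ᵐ q' ∂(Q[|c n ⁻¹' {c n q}]), c n q' = c n q := fun n =>
    ae_cond_mem (hcell n)
  have key : ∀ (l n : ℕ) (q' : Measure Y), l < n → c n q' = c n q →
      ((t (e l).2 < ∫⁻ y, g (e l).1 y ∂q') ↔ (t (e l).2 < ∫⁻ y, g (e l).1 y ∂q)) := by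
    intro l n q' hl h
    have := congrFun h ⟨l, hl⟩
    exact iff_of_eq this
  have hdense : Dense (range t) := TopologicalSpace.denseRange_denseSeq ℝ≥0∞
  rw [tendsto_order]
  constructor
  · intro u hu
    obtain ⟨_, ⟨j, rfl⟩, hj1, hj2⟩ := hdense.exists_between hu
    obtain ⟨l, hl⟩ := he (i, j)
    filter_upwards [eventually_gt_atTop l] with n hn
    have := hpr n
    rw [lint_avg _ _ (hg i)]
    refine hj1.trans_le ?_
    calc t j = ∫⁻ _, t j ∂(Q[|c n ⁻¹' {c n q}]) := by simp
      _ ≤ _ := by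
        apply lintegral_mono_ae
        filter_upwards [hmem n] with q' hq'
        have := key l n q' hn hq'
        rw [hl] at this
        exact (this.2 hj2).le
  · intro v hv
    obtain ⟨_, ⟨j, rfl⟩, hj1, hj2⟩ := hdense.exists_between hv
    obtain ⟨l, hl⟩ := he (i, j)
    filter_upwards [eventually_gt_atTop l] with n hn
    have := hpr n
    rw [lint_avg _ _ (hg i)]
    refine lt_of_le_of_lt ?_ hj2
    calc _ ≤ ∫⁻ _, t j ∂(Q[|c n ⁻¹' {c n q}]) := by
          apply lintegral_mono_ae
          filter_upwards [hmem n] with q' hq'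
          have := key l n q' hn hq'
          rw [hl] at this
          exact not_lt.1 fun h => absurd (this.1 h) (not_lt.2 hj1.le)
      _ = t j := by simp

lemma Pr_comb {Y : Type*} [MeasurableSpace Y] [PseudoMetricSpace Y] {r : ℝ} {y₀ : Y}
    {p q : Measure Y} (hp : p ∈ Pr r y₀) (hq : q ∈ Pr r y₀) {s t : ℝ≥0} (h : s + t = 1) :
    (s : ℝ≥0∞) • p + (t : ℝ≥0∞) • q ∈ Pr r y₀ := by
  have := hp.1
  have := hq.1
  refine ⟨⟨?_⟩, ?_⟩
  · simp only [Measure.add_apply, Measure.smul_apply, measure_univ, smul_eq_mul, mul_one]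
    exact_mod_cast h
  · unfold FinMom
    rw [lintegral_add_measure, lintegral_smul_measure, lintegral_smul_measure]
    exact ENNReal.add_lt_top.2 ⟨ENNReal.mul_lt_top ENNReal.coe_lt_top hp.2,
      ENNReal.mul_lt_top ENNReal.coe_lt_top hq.2⟩

lemma finite_jensen {Y ι : Type*} [MeasurableSpace Y] [PseudoMetricSpace Y] {r : ℝ} {y₀ : Y}
    (f : Measure Y → ℝ)
    (hf : ∀ p ∈ Pr r y₀, ∀ q ∈ Pr r y₀, ∀ s t : ℝ≥0, s + t = 1 →
      f ((s : ℝ≥0∞) • p + (t : ℝ≥0∞) • q) ≤ s * f p + t * f q)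
    (s : Finset ι) : ∀ (w : ι → ℝ≥0) (p : ι → Measure Y), ∑ i ∈ s, w i = 1 →
    (∀ i ∈ s, w i ≠ 0 → p i ∈ Pr r y₀) →
    (∑ i ∈ s, (w i : ℝ≥0∞) • p i ∈ Pr r y₀) ∧
      f (∑ i ∈ s, (w i : ℝ≥0∞) • p i) ≤ ∑ i ∈ s, (w i : ℝ) * f (p i) := by
  classical
  induction s using Finset.induction_on with
  | empty => intro w p h; simp at h
  | insert a s ha ih =>
    intro w p hw hp
    simp only [Finset.sum_insert ha] at hw ⊢
    by_cases h0 : w a = 0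
    · simp only [h0, zero_add, ENNReal.coe_zero, zero_smul, NNReal.coe_zero, zero_mul] at hw ⊢
      exact ih w p hw fun i hi => hp i (by simp [hi])
    have hpa := hp a (by simp) h0
    set u := ∑ i ∈ s, w i with hu
    by_cases hu0 : u = 0
    · have hz : ∀ i ∈ s, w i = 0 := Finset.sum_eq_zero_iff.1 hu0
      have ha1 : w a = 1 := by rw [hu0, add_zero] at hw; exact hw
      have e1 : ∑ i ∈ s, (w i : ℝ≥0∞) • p i = 0 :=
        Finset.sum_eq_zero fun i hi => by simp [hz i hi]
      have e2 : ∑ i ∈ s, (w i : ℝ) * f (p i) = 0 :=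
        Finset.sum_eq_zero fun i hi => by simp [hz i hi]
      rw [e1, e2, ha1]
      simpa using hpa
    · have hw' : ∑ i ∈ s, u⁻¹ * w i = 1 := by
        rw [← Finset.mul_sum, inv_mul_cancel₀ hu0]
      obtain ⟨i1, i2⟩ := ih (fun i => u⁻¹ * w i) p hw' fun i hi hne =>
        hp i (by simp [hi]) (right_ne_zero_of_mul hne)
      have e1 : ∑ i ∈ s, (w i : ℝ≥0∞) • p i =
          (u : ℝ≥0∞) • ∑ i ∈ s, ((u⁻¹ * w i : ℝ≥0) : ℝ≥0∞) • p i := by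
        rw [Finset.smul_sum]
        refine Finset.sum_congr rfl fun i _ => ?_
        rw [smul_smul, ← ENNReal.coe_mul, mul_inv_cancel_left₀ hu0]
      have e2 : ∑ i ∈ s, (w i : ℝ) * f (p i) =
          u * ∑ i ∈ s, ((u⁻¹ * w i : ℝ≥0) : ℝ) * f (p i) := by
        rw [Finset.mul_sum]
        refine Finset.sum_congr rfl fun i _ => ?_
        rw [← mul_assoc, ← NNReal.coe_mul, mul_inv_cancel_left₀ hu0]
      rw [e1, e2]
      refine ⟨Pr_comb hpa i1 hw, (hf _ hpa _ i1 _ _ hw).trans ?_⟩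
      gcongr

lemma join_eq_sum {Y α : Type*} [MeasurableSpace Y] [Fintype α] [MeasurableSpace α]
    [DiscreteMeasurableSpace α]
    (Q : Measure (Measure Y)) [IsProbabilityMeasure Q] {c : Measure Y → α} (hc : Measurable c) :
    Q.join = ∑ a, Q (c ⁻¹' {a}) • avg Q (c ⁻¹' {a}) := by
  ext s hs
  rw [Measure.join_apply hs, Measure.finsetSum_apply]
  conv_lhs => rw [← sum_meas_smul_cond_fiber hc Q]
  rw [lintegral_finsetSum_measure]
  refine Finset.sum_congr rfl fun a _ => ?_
  rw [lintegral_smul_measure, Measure.smul_apply, avg, Measure.join_apply hs]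

section
variable {Y : Type*} [MeasurableSpace Y] [MetricSpace Y] [SecondCountableTopology Y] [BorelSpace Y]

lemma moment_le {r : ℝ} (hr : 1 ≤ r) (y₀ : Y) (p : Measure Y) :
    ∫⁻ y, ENNReal.ofReal (dist y y₀ ^ r) ∂p ≤ Wr r p (Measure.dirac y₀) ^ r := by
  have r0 : 0 < r := by linarith
  have h : (∫⁻ y, ENNReal.ofReal (dist y y₀ ^ r) ∂p) ^ (1 / r) ≤ Wr r p (Measure.dirac y₀) := by
    refine le_iInf₂ fun π hπ => ?_
    refine ENNReal.rpow_le_rpow ?_ (by positivity)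
    rw [← hπ.1, lintegral_map (measD y₀) measurable_fst]
    apply lintegral_mono_ae
    have h1 : ∀ᵐ y ∂(π.map Prod.snd), y = y₀ := by
      rw [hπ.2]
      exact (ae_dirac_iff (measurableSet_singleton y₀)).2 rfl
    have h2 := ae_of_ae_map measurable_snd.aemeasurable h1
    filter_upwards [h2] with z hz
    rw [hz]
  calc _ = ((∫⁻ y, ENNReal.ofReal (dist y y₀ ^ r) ∂p) ^ (1 / r)) ^ r := by
        rw [← ENNReal.rpow_mul, one_div_mul_cancel r0.ne', ENNReal.rpow_one]
    _ ≤ _ := ENNReal.rpow_le_rpow h r0.le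

lemma Wr_le_moment {r : ℝ} (hr : 1 ≤ r) (y₀ : Y) (p q : Measure Y) [IsProbabilityMeasure p]
    [IsProbabilityMeasure q] :
    Wr r p q ^ r ≤ ENNReal.ofReal (2 ^ r) * (∫⁻ y, ENNReal.ofReal (dist y y₀ ^ r) ∂p +
        ∫⁻ y, ENNReal.ofReal (dist y y₀ ^ r) ∂q) := by
  have r0 : 0 < r := by linarith
  have h : p univ = q univ := by simp
  have := Wr_le hr (couplings_prod p q h) (rest_cost hr y₀ p q h)
  calc _ ≤ _ := ENNReal.rpow_le_rpow this r0.le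
    _ = _ := by rw [← ENNReal.rpow_mul, one_div_mul_cancel r0.ne', ENNReal.rpow_one]

lemma avg_mem {r : ℝ} (y₀ : Y) (Q : Measure (Measure Y)) [IsProbabilityMeasure Q]
    (hQ : ∀ᵐ p ∂Q, p ∈ Pr r y₀)
    (hM : ∫⁻ q, ∫⁻ y, ENNReal.ofReal (dist y y₀ ^ r) ∂q ∂Q < ⊤)
    {A : Set (Measure Y)} (hA : Q A ≠ 0) : avg Q A ∈ Pr r y₀ := by
  have := cond_isProbabilityMeasure hA
  refine ⟨⟨?_⟩, ?_⟩
  · rw [avg, Measure.join_apply MeasurableSet.univ]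
    have h : ∀ᵐ p ∂(Q[|A]), p univ = 1 := by
      filter_upwards [cond_absolutelyContinuous.ae_le hQ] with p hp
      exact hp.1.measure_univ
    rw [lintegral_congr_ae h]
    simp
  · unfold FinMom
    rw [lint_avg _ _ (measD y₀), ProbabilityTheory.cond, lintegral_smul_measure]
    refine ENNReal.mul_lt_top (ENNReal.inv_lt_top.2 (pos_iff_ne_zero.2 hA)) ?_
    exact (setLIntegral_le_lintegral _ _).trans_lt hM

end

lemma epos_coe (x : ℝ) : epos (x : EReal) = ENNReal.ofReal x := by
  simp [epos]

lemma coe_toReal_ennreal {a : ℝ≥0∞} (ha : a ≠ ⊤) : ((a.toReal : ℝ) : EReal) = (a : EReal) := by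
  lift a to ℝ≥0 using ha
  rfl

lemma le_eInt {X : Type*} [MeasurableSpace X] {μ : Measure X} {F : X → EReal} {f L : X → ℝ}
    (hF : ∀ᵐ x ∂μ, F x = f x) (hL : Integrable L μ) (hLf : ∀ᵐ x ∂μ, L x ≤ f x) :
    ((∫ x, L x ∂μ : ℝ) : EReal) ≤ eInt F μ := by
  rw [integral_eq_lintegral_pos_part_sub_lintegral_neg_part hL, EReal.coe_sub]
  have h1 : ∫⁻ x, ENNReal.ofReal (L x) ∂μ ≠ ⊤ :=
    ((lintegral_mono fun x => ENNReal.ofReal_le_ofReal (le_abs_self _)).trans_lt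
      hL.abs.lintegral_lt_top).ne
  have h2 : ∫⁻ x, ENNReal.ofReal (-L x) ∂μ ≠ ⊤ :=
    ((lintegral_mono fun x => ENNReal.ofReal_le_ofReal (neg_le_abs _)).trans_lt
      hL.abs.lintegral_lt_top).ne
  rw [coe_toReal_ennreal h1, coe_toReal_ennreal h2]
  unfold eInt
  refine EReal.sub_le_sub ?_ ?_
  · refine EReal.coe_ennreal_le_coe_ennreal_iff.2 (lintegral_mono_ae ?_)
    filter_upwards [hF, hLf] with x hx hl
    rw [hx, epos_coe]
    exact ENNReal.ofReal_le_ofReal hl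
  · refine EReal.coe_ennreal_le_coe_ennreal_iff.2 (lintegral_mono_ae ?_)
    filter_upwards [hF, hLf] with x hx hl
    rw [hx, ← EReal.coe_neg, epos_coe]
    exact ENNReal.ofReal_le_ofReal (by linarith)

end JensenAux

/-- Jensen's inequality for convex upper semicontinuous functionals on
`𝒫_r(Y)` that are suitably bounded above (Lemma `lem:Jensen` (b)). -/
theorem statement13 {Y : Type*}
    [MeasurableSpace Y] [MetricSpace Y] [CompleteSpace Y] [SecondCountableTopology Y]
    [BorelSpace Y]
    (r : ℝ) (hr : 1 ≤ r) (y₀ : Y)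
    (F : Measure Y → EReal) (hbot : ∀ q, F q ≠ ⊥)
    (hconv : EConvexOn (Pr r y₀) F) (husc : UscWr1 r y₀ F)
    (p₀ : Measure Y) (hp₀ : p₀ ∈ Pr r y₀) (K : ℝ)
    (hub : ∀ q ∈ Pr r y₀, F q ≤ ((K * (Wr r q p₀ ^ r).toReal : ℝ) : EReal)) :
    ∀ Q ∈ PrP r y₀, F (intensity Q) ≤ eInt F Q := by
  classical
  intro Q hQ
  obtain ⟨hQp, hQm, hQi⟩ := hQ
  have := hp₀.1
  set M : Measure Y → ℝ≥0∞ := fun q => ∫⁻ y, ENNReal.ofReal (dist y y₀ ^ r) ∂q with hMdef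
  have hMmeas : Measurable M := Measure.measurable_lintegral (JensenAux.measD y₀)
  have hM : ∫⁻ q, M q ∂Q < ⊤ :=
    (lintegral_mono fun q => JensenAux.moment_le hr y₀ q).trans_lt hQi
  have hMfin : ∀ q ∈ Pr r y₀, M q ≠ ⊤ := fun q hq => ne_of_lt hq.2
  set G : Measure Y → ℝ := fun q => |K| * (2 ^ r * ((M q).toReal + (M p₀).toReal)) with hG
  set f : Measure Y → ℝ := fun q => (F q).toReal with hf
  have hF : ∀ q ∈ Pr r y₀, F q = f q := by
    intro q hq
    refine (EReal.coe_toReal (fun h => ?_) (hbot q)).symm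
    have := hub q hq
    rw [h, top_le_iff] at this
    exact EReal.coe_ne_top _ this
  have hfG : ∀ q ∈ Pr r y₀, f q ≤ G q := by
    intro q hq
    have := hq.1
    have h1 := hub q hq
    rw [hF q hq, EReal.coe_le_coe_iff] at h1
    have h2 := JensenAux.Wr_le_moment hr y₀ q p₀
    have h3 : (Wr r q p₀ ^ r).toReal ≤ 2 ^ r * ((M q).toReal + (M p₀).toReal) := by
      have h4 := ENNReal.toReal_mono (ENNReal.mul_ne_top ENNReal.ofReal_ne_top
        (ENNReal.add_ne_top.2 ⟨hMfin q hq, hMfin p₀ hp₀⟩)) h2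
      rwa [ENNReal.toReal_mul, ENNReal.toReal_add (hMfin q hq) (hMfin p₀ hp₀),
        ENNReal.toReal_ofReal (by positivity)] at h4
    calc f q ≤ K * (Wr r q p₀ ^ r).toReal := h1
      _ ≤ |K| * (Wr r q p₀ ^ r).toReal := by gcongr; exact le_abs_self K
      _ ≤ _ := by simp only [hG]; gcongr
  set h : Measure Y → ℝ := fun q => G q - f q with hh
  have hconc : ∀ p ∈ Pr r y₀, ∀ q ∈ Pr r y₀, ∀ s t : ℝ≥0, s + t = 1 →
      (fun q => -h q) ((s : ℝ≥0∞) • p + (t : ℝ≥0∞) • q) ≤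
        s * (fun q => -h q) p + t * (fun q => -h q) q := by
    intro p hp q hq s t hst
    have hs1 : s ≤ 1 := by rw [← hst]; exact le_self_add
    have ht : 1 - s = t := by rw [← hst]; exact add_tsub_cancel_left s t
    have hc := hconv p hp q hq s hs1
    have hmem := JensenAux.Pr_comb hp hq hst
    rw [ht, hF _ hmem, hF p hp, hF q hq] at hc
    have hc' : f ((s : ℝ≥0∞) • p + (t : ℝ≥0∞) • q) ≤ s * f p + t * f q := by
      exact_mod_cast hc
    have hMa : (M ((s : ℝ≥0∞) • p + (t : ℝ≥0∞) • q)).toReal =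
        s * (M p).toReal + t * (M q).toReal := by
      simp only [hMdef]
      rw [lintegral_add_measure, lintegral_smul_measure, lintegral_smul_measure,
        smul_eq_mul, smul_eq_mul,
        ENNReal.toReal_add (ENNReal.mul_ne_top ENNReal.coe_ne_top (hMfin p hp))
          (ENNReal.mul_ne_top ENNReal.coe_ne_top (hMfin q hq)), ENNReal.toReal_mul,
        ENNReal.toReal_mul]
      rfl
    have hst' : (t : ℝ) = 1 - s := by
      have : (s : ℝ) + t = 1 := by exact_mod_cast hst
      linarith
    simp only [hh, hG, hMa]
    rw [hst'] at hc' ⊢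
    linarith
  -- partitions of the base space
  obtain ⟨B, δ, hBm, hBd, hBU, hδ0, hδ⟩ := JensenAux.exists_partition y₀
  have hTm : ∀ k m, MeasurableSet (JensenAux.tail (B k) m) := fun k m =>
    (Finset.measurableSet_biUnion _ fun j _ => hBm k j).compl
  obtain ⟨c, hc, hcell⟩ := JensenAux.exists_cells (J := (ℕ × ℕ) ⊕ ((ℕ × ℕ) ⊕ (ℕ × ℕ))) Q
    (Sum.elim (fun i => (B i.1 i.2).indicator fun _ => 1)
      (Sum.elim (fun i => (B i.1 i.2).indicator fun y => ENNReal.ofReal (dist y y₀ ^ r))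
        (fun i => (JensenAux.tail (B i.1) i.2).indicator
          fun y => ENNReal.ofReal (dist y y₀ ^ r))))
    (by
      rintro (i | i | i)
      · exact measurable_const.indicator (hBm _ _)
      · exact (JensenAux.measD y₀).indicator (hBm _ _)
      · exact (JensenAux.measD y₀).indicator (hTm _ _))
  set ν : ℕ → Measure Y → Measure Y := fun n q => JensenAux.avg Q (c n ⁻¹' {c n q}) with hν
  -- the finite Jensen inequality
  have hfin : ∀ n, Q.join ∈ Pr r y₀ ∧
      ∫⁻ q, ENNReal.ofReal (h (ν n q)) ∂Q ≤ ENNReal.ofReal (h Q.join) := by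
    intro n
    set w : (Fin n → Prop) → ℝ≥0 := fun a => (Q (c n ⁻¹' {a})).toNNReal with hw
    have hwc : ∀ a, (w a : ℝ≥0∞) = Q (c n ⁻¹' {a}) := fun a =>
      ENNReal.coe_toNNReal (measure_ne_top _ _)
    have hj := JensenAux.join_eq_sum Q (hc n)
    simp only [← hwc] at hj
    have hw1 : ∑ a, w a = 1 := by
      have h1 := congrArg (fun μ : Measure (Measure Y) => μ univ)
        (ProbabilityTheory.sum_meas_smul_cond_fiber (hc n) Q)
      have h2 : ∑ a, (w a : ℝ≥0∞) = 1 := by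
        have h3 : ∑ a, Q.map (c n) {a} = 1 := by
          have : IsProbabilityMeasure (Q.map (c n)) :=
            Measure.isProbabilityMeasure_map (hc n).aemeasurable
          have h4 := lintegral_fintype (μ := Q.map (c n)) (fun _ => 1)
          simp only [lintegral_const, measure_univ, one_mul] at h4
          exact h4.symm
        rw [← h3]
        refine Finset.sum_congr rfl fun a _ => ?_
        rw [hwc, Measure.map_apply (hc n) (MeasurableSet.singleton _)]
      exact_mod_cast h2
    have hmem : ∀ a, w a ≠ 0 → JensenAux.avg Q (c n ⁻¹' {a}) ∈ Pr r y₀ := by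
      intro a ha
      refine JensenAux.avg_mem y₀ Q hQm hM ?_
      rw [← hwc]
      exact_mod_cast ha
    obtain ⟨j1, j2⟩ := JensenAux.finite_jensen (fun q => -h q) hconc Finset.univ w
      (fun a => JensenAux.avg Q (c n ⁻¹' {a})) hw1 (fun a _ => hmem a)
    rw [← hj] at j1 j2
    refine ⟨j1, ?_⟩
    have e1 : ∫⁻ q, ENNReal.ofReal (h (ν n q)) ∂Q =
        ∫⁻ a, ENNReal.ofReal (h (JensenAux.avg Q (c n ⁻¹' {a}))) ∂(Q.map (c n)) := by
      rw [lintegral_map (measurable_of_finite _) (hc n)]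
    have e2 : ∀ a, ENNReal.ofReal (h (JensenAux.avg Q (c n ⁻¹' {a}))) * Q.map (c n) {a} =
        ENNReal.ofReal (w a * h (JensenAux.avg Q (c n ⁻¹' {a}))) := by
      intro a
      rw [Measure.map_apply (hc n) (MeasurableSet.singleton _), ← hwc,
        ENNReal.ofReal_mul (NNReal.coe_nonneg _), ENNReal.ofReal_coe_nnreal, mul_comm]
    rw [e1, lintegral_fintype, Finset.sum_congr rfl fun a _ => e2 a,
      ← ENNReal.ofReal_sum_of_nonneg]
    · apply ENNReal.ofReal_le_ofReal
      simp only [mul_neg, Finset.sum_neg_distrib] at j2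
      linarith
    · intro a _
      by_cases ha : w a = 0
      · simp [ha]
      · exact mul_nonneg (NNReal.coe_nonneg _) (sub_nonneg.2 (hfG _ (hmem a ha)))
  have hjoin := (hfin 0).1
  -- lower semicontinuity along the cells
  have hlsc : ∀ᵐ q ∂Q, ENNReal.ofReal (h q) ≤
      liminf (fun n => ENNReal.ofReal (h (ν n q))) atTop := by
    filter_upwards [hcell, hQm] with q hq hqP
    obtain ⟨hq0, hqt⟩ := hq
    have hmem : ∀ n, ν n q ∈ Pr r y₀ := fun n => JensenAux.avg_mem y₀ Q hQm hM (hq0 n)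
    have t1 : ∀ k j, Tendsto (fun n => ν n q (B k j)) atTop (𝓝 (q (B k j))) := by
      intro k j
      have := hqt (Sum.inl (k, j))
      simpa only [Sum.elim_inl, lintegral_indicator_const (hBm k j), one_mul] using this
    have t2 : ∀ k j, Tendsto (fun n => ∫⁻ y in B k j, ENNReal.ofReal (dist y y₀ ^ r) ∂(ν n q))
        atTop (𝓝 (∫⁻ y in B k j, ENNReal.ofReal (dist y y₀ ^ r) ∂q)) := by
      intro k j
      have := hqt (Sum.inr (Sum.inl (k, j)))
      simpa only [Sum.elim_inl, Sum.elim_inr, lintegral_indicator (hBm k j)] using this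
    have t3 : ∀ k m, Tendsto (fun n => ∫⁻ y in JensenAux.tail (B k) m,
        ENNReal.ofReal (dist y y₀ ^ r) ∂(ν n q))
        atTop (𝓝 (∫⁻ y in JensenAux.tail (B k) m, ENNReal.ofReal (dist y y₀ ^ r) ∂q)) := by
      intro k m
      have := hqt (Sum.inr (Sum.inr (k, m)))
      simpa only [Sum.elim_inr, lintegral_indicator (hTm k m)] using this
    have tW : WrTendsto r (fun n => ν n q) q :=
      JensenAux.Wr_tendsto hr y₀ _ q (fun n => (hmem n).1) hqP B hBm hBd hBU δ hδ0 hδ t1 t2 t3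
    have tM : Tendsto (fun n => M (ν n q)) atTop (𝓝 (M q)) := by
      have := t3 0 0
      simpa [JensenAux.tail, hMdef] using this
    have tG : Tendsto (fun n => G (ν n q)) atTop (𝓝 (G q)) := by
      have := (ENNReal.tendsto_toReal (hMfin q hqP)).comp tM
      exact ((this.add_const _).const_mul _).const_mul _
    have husc' := husc q (fun n => ν n q) hqP hmem tW
    refine le_of_forall_lt_imp_le_of_dense fun x hx => ?_
    refine le_liminf_of_le (by isBoundedDefault) ?_
    have hxt : x ≠ ⊤ := hx.ne_top
    have hx' : x.toReal < h q := (ENNReal.lt_ofReal_iff_toReal_lt hxt).1 hx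
    set ε := (h q - x.toReal) / 2 with hε
    have hε0 : 0 < ε := by rw [hε]; linarith
    have ev1 : ∀ᶠ n in atTop, G q - ε < G (ν n q) := tG.eventually (lt_mem_nhds (by linarith))
    have ev2 : ∀ᶠ n in atTop, F (ν n q) < ((f q + ε : ℝ) : EReal) := by
      refine eventually_lt_of_limsup_lt (lt_of_le_of_lt husc' ?_)
      rw [hF q hqP, EReal.coe_lt_coe_iff]
      linarith
    filter_upwards [ev1, ev2] with n h1 h2
    rw [hF _ (hmem n), EReal.coe_lt_coe_iff] at h2
    rw [← ENNReal.ofReal_toReal hxt]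
    apply ENNReal.ofReal_le_ofReal
    simp only [hh] at hε ⊢
    linarith
  -- Fatou
  set L : Measure Y → ℝ≥0∞ := fun q => liminf (fun n => ENNReal.ofReal (h (ν n q))) atTop with hL
  have hHm : ∀ n, Measurable fun q => ENNReal.ofReal (h (ν n q)) := fun n =>
    (measurable_of_finite
      (fun a => ENNReal.ofReal (h (JensenAux.avg Q (c n ⁻¹' {a}))))).comp (hc n)
  have hLm : Measurable L := Measurable.liminf hHm
  have hLle : ∫⁻ q, L q ∂Q ≤ ENNReal.ofReal (h Q.join) := by
    refine (lintegral_liminf_le hHm).trans ?_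
    refine (liminf_le_liminf (Eventually.of_forall fun n => (hfin n).2)).trans ?_
    simp
  have hLt : ∫⁻ q, L q ∂Q ≠ ⊤ := (hLle.trans_lt ENNReal.ofReal_lt_top).ne
  have hLfin : ∀ᵐ q ∂Q, L q < ⊤ := ae_lt_top hLm hLt
  have iL : Integrable (fun q => (L q).toReal) Q :=
    integrable_toReal_of_lintegral_ne_top hLm.aemeasurable hLt
  have iM : Integrable (fun q => (M q).toReal) Q :=
    integrable_toReal_of_lintegral_ne_top hMmeas.aemeasurable hM.ne
  have iG : Integrable G Q := ((iM.add (integrable_const _)).const_mul _).const_mul _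
  have hGi : ∫ q, G q ∂Q = G Q.join := by
    simp only [hG]
    rw [integral_const_mul, integral_const_mul, integral_add iM (integrable_const _),
      integral_toReal hMmeas.aemeasurable (ae_lt_top hMmeas hM.ne)]
    have : M Q.join = ∫⁻ q, M q ∂Q := Measure.lintegral_join (JensenAux.measD y₀).aemeasurable
    rw [this]
    simp
  have hmain := JensenAux.le_eInt (μ := Q) (F := F) (f := f) (L := fun q => G q - (L q).toReal)
    (by filter_upwards [hQm] with q hq using hF q hq) (iG.sub iL)
    (by
      filter_upwards [hlsc, hLfin, hQm] with q h1 h2 h3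
      have h4 : h q ≤ (L q).toReal := (ENNReal.ofReal_le_iff_le_toReal h2.ne).1 h1
      simp only [hh] at h4
      linarith)
  refine le_trans ?_ hmain
  unfold intensity
  rw [hF _ hjoin, EReal.coe_le_coe_iff, integral_sub iG iL, hGi,
    integral_toReal hLm.aemeasurable hLfin]
  have h5 : (∫⁻ q, L q ∂Q).toReal ≤ h Q.join :=
    ENNReal.toReal_le_of_le_ofReal (sub_nonneg.2 (hfG _ hjoin)) hLle
  simp only [hh] at h5
  linarith
end
end

section
/- Let μ, ν ∈ 𝒫_1(ℝ) and let θ : ℝ → ℝ be convex. Then inf_{π ∈ Π(μ,ν)} ∫ θ(b(π_x) − x) μ(dx) = inf_{η ≤_c ν} inf_{π ∈ Π(μ,η)} ∫ θ(y − x) π(dx,dy), where the outer infimum on the right runs over all η ∈ 𝒫_1(ℝ) dominated by ν in convex order. -/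
open MeasureTheory Set Filter
open scoped ENNReal NNReal Topology RealInnerProductSpace

noncomputable section

open ProbabilityTheory

namespace WOT

lemma eInt_real {X : Type*} [MeasurableSpace X] (f : X → ℝ) (μ : Measure X) :
    eInt (fun x => ((f x : ℝ) : EReal)) μ
      = ((∫⁻ x, ENNReal.ofReal (f x) ∂μ : ℝ≥0∞) : EReal)
        - ((∫⁻ x, ENNReal.ofReal (-(f x)) ∂μ : ℝ≥0∞) : EReal) := by
  have h2 : ∀ x, epos (-(f x : EReal)) = ENNReal.ofReal (-(f x)) := by
    intro x
    rw [← EReal.coe_neg]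
    simp only [epos, EReal.coe_ne_top, if_false, EReal.toReal_coe]
  unfold eInt
  simp only [h2]
  simp only [epos, EReal.coe_ne_top, if_false, EReal.toReal_coe]

lemma eInt_int {X : Type*} [MeasurableSpace X] {f : X → ℝ} {μ : Measure X}
    (hf : Integrable f μ) :
    eInt (fun x => ((f x : ℝ) : EReal)) μ = ((∫ x, f x ∂μ : ℝ) : EReal) := by
  rw [eInt_real, integral_eq_lintegral_pos_part_sub_lintegral_neg_part hf, EReal.coe_sub]
  have h1 : ∫⁻ x, ENNReal.ofReal (f x) ∂μ ≠ ⊤ := hf.lintegral_lt_top.ne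
  have h2 : ∫⁻ x, ENNReal.ofReal (-(f x)) ∂μ ≠ ⊤ := hf.neg.lintegral_lt_top.ne
  rw [EReal.coe_ennreal_toReal h1, EReal.coe_ennreal_toReal h2]

lemma eInt_top {X : Type*} [MeasurableSpace X] {f g : X → ℝ} {μ : Measure X}
    (hg : Integrable g μ) (hgf : ∀ x, g x ≤ f x) (hm : AEStronglyMeasurable f μ)
    (hf : ¬ Integrable f μ) :
    eInt (fun x => ((f x : ℝ) : EReal)) μ = ⊤ := by
  rw [eInt_real]
  have h2 : ∫⁻ x, ENNReal.ofReal (-(f x)) ∂μ ≠ ⊤ := by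
    refine ne_top_of_le_ne_top hg.neg.lintegral_lt_top.ne (lintegral_mono fun x => ?_)
    exact ENNReal.ofReal_le_ofReal (neg_le_neg (hgf x))
  have h1 : ∫⁻ x, ENNReal.ofReal (f x) ∂μ = ⊤ := by
    by_contra h1
    apply hf
    refine ⟨hm, ?_⟩
    have : ∫⁻ x, ‖f x‖ₑ ∂μ
        ≤ ∫⁻ x, ENNReal.ofReal (f x) ∂μ + ∫⁻ x, ENNReal.ofReal (-(f x)) ∂μ := by
      rw [← lintegral_add_left' hm.aemeasurable.ennreal_ofReal]
      refine lintegral_mono fun x => ?_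
      simp only
      rw [Real.enorm_eq_ofReal_abs]
      rcases le_total 0 (f x) with h | h
      · rw [abs_of_nonneg h]; exact le_self_add
      · rw [abs_of_nonpos h]; exact le_add_self
    exact lt_of_le_of_lt this (ENNReal.add_lt_top.2 ⟨lt_top_iff_ne_top.2 h1,
      lt_top_iff_ne_top.2 h2⟩)
  rw [h1]
  lift (∫⁻ x, ENNReal.ofReal (-(f x)) ∂μ) to ℝ≥0 using h2 with r
  rfl

lemma cvx_cont {θ : ℝ → ℝ} (hθ : ConvexOn ℝ Set.univ θ) : Continuous θ :=
  continuousOn_univ.1 (hθ.continuousOn isOpen_univ)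

lemma cvx_affine {θ : ℝ → ℝ} (hθ : ConvexOn ℝ Set.univ θ) :
    ∃ c c' : ℝ, ∀ y, c * y + c' ≤ θ y := by
  obtain ⟨c, c', h⟩ := hθ.exists_affine_le_real isClosed_univ
    (cvx_cont hθ).continuousOn.lowerSemicontinuousOn
  exact ⟨c, c', fun y => h y trivial⟩

lemma finMom_iff {μ : Measure ℝ} : FinMom 1 (0 : ℝ) μ ↔ Integrable (fun x : ℝ => x) μ := by
  unfold FinMom
  simp only [Real.rpow_one, dist_zero_right]
  constructor
  · intro h
    refine ⟨aestronglyMeasurable_id, ?_⟩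
    simpa [HasFiniteIntegral, Real.enorm_eq_ofReal_abs] using h
  · intro h
    simpa [HasFiniteIntegral, Real.enorm_eq_ofReal_abs] using h.2

/-- Jensen's inequality along a disintegration. -/
lemma jensen_compProd (μ : Measure ℝ) [IsProbabilityMeasure μ] (κ : Kernel ℝ ℝ) [IsMarkovKernel κ]
    (hμ : Integrable (fun x : ℝ => x) μ)
    (hy : Integrable (fun z : ℝ × ℝ => z.2) (μ ⊗ₘ κ))
    (θ : ℝ → ℝ) (hθ : ConvexOn ℝ Set.univ θ) (c : ℝ) :
    eInt (fun x => ((θ (bary (κ x) - c * x) : ℝ) : EReal)) μ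
      ≤ eInt (fun z : ℝ × ℝ => ((θ (z.2 - c * z.1) : ℝ) : EReal)) (μ ⊗ₘ κ) := by
  have hc := cvx_cont hθ
  obtain ⟨a, a', ha⟩ := cvx_affine hθ
  have hfst : Integrable (fun z : ℝ × ℝ => z.1) (μ ⊗ₘ κ) := by
    have : Integrable (fun x : ℝ => x) ((μ ⊗ₘ κ).map Prod.fst) := by
      have := Measure.fst_compProd μ κ
      rw [Measure.fst] at this
      rwa [this]
    exact this.comp_measurable measurable_fst
  have hmeas : AEStronglyMeasurable (fun z : ℝ × ℝ => θ (z.2 - c * z.1)) (μ ⊗ₘ κ) := by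
    have : Continuous (fun z : ℝ × ℝ => θ (z.2 - c * z.1)) := by fun_prop
    exact this.aestronglyMeasurable
  by_cases hi : Integrable (fun z : ℝ × ℝ => θ (z.2 - c * z.1)) (μ ⊗ₘ κ)
  swap
  · rw [eInt_top (g := fun z : ℝ × ℝ => a * (z.2 - c * z.1) + a') _ (fun z => ha _) hmeas hi]
    · exact le_top
    · exact ((hy.sub (hfst.const_mul c)).const_mul a).add (integrable_const _)
  have hT : Integrable (fun x => bary (κ x)) μ := by
    have := Integrable.integral_compProd (κ := Kernel.const Unit μ) (η := Kernel.prodMkLeft Unit κ)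
      (a := ()) (f := fun z : ℝ × ℝ => z.2) hy
    simpa [bary] using this
  have hJ : Integrable (fun x => ∫ y, θ (y - c * x) ∂(κ x)) μ := by
    have := Integrable.integral_compProd (κ := Kernel.const Unit μ) (η := Kernel.prodMkLeft Unit κ)
      (a := ()) (f := fun z : ℝ × ℝ => θ (z.2 - c * z.1)) hi
    simpa using this
  have h1 := ((Measure.integrable_compProd_iff hmeas).1 hi).1
  have h2 := ((Measure.integrable_compProd_iff hy.aestronglyMeasurable).1 hy).1
  have hle : ∀ᵐ x ∂μ, θ (bary (κ x) - c * x) ≤ ∫ y, θ (y - c * x) ∂(κ x) := by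
    filter_upwards [h1, h2] with x hx1 hx2
    have := hθ.map_integral_le (μ := κ x) (f := fun y => y - c * x) hc.continuousOn isClosed_univ
      (by simp) (hx2.sub (integrable_const _)) hx1
    rwa [integral_sub hx2 (integrable_const _), integral_const, probReal_univ, one_smul] at this
  have hlow : Integrable (fun x => a * (bary (κ x) - c * x) + a') μ :=
    ((hT.sub (hμ.const_mul c)).const_mul a).add (integrable_const _)
  have hL : Integrable (fun x => θ (bary (κ x) - c * x)) μ := by
    refine integrable_of_le_of_le (hc.comp_aestronglyMeasurable
      (hT.sub (hμ.const_mul c)).aestronglyMeasurable) (Eventually.of_forall fun x => ha _) hle hlow hJ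
  rw [eInt_int hL, eInt_int hi, Measure.integral_compProd hi]
  exact EReal.coe_le_coe_iff.2 (integral_mono_ae hL hJ hle)

lemma disint_eq {π : Measure (ℝ × ℝ)} {μ : Measure ℝ} [IsProbabilityMeasure μ]
    {K : ℝ → Measure ℝ} (h : IsDisint π μ K) :
    ∃ κ : Kernel ℝ ℝ, IsMarkovKernel κ ∧ (∀ x, κ x = K x) ∧ π = μ ⊗ₘ κ := by
  let κ : Kernel ℝ ℝ := ⟨K, h.1⟩
  have hκ : IsMarkovKernel κ := ⟨h.2.1⟩
  refine ⟨κ, hκ, fun x => rfl, ?_⟩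
  ext s hs
  rw [h.2.2 s hs, Measure.compProd_apply hs]
  rfl

/-- The law of the barycenters is dominated in convex order. -/
lemma bary_order (μ ν : Measure ℝ) [IsProbabilityMeasure μ] (κ : Kernel ℝ ℝ) [IsMarkovKernel κ]
    (hμ : Integrable (fun x : ℝ => x) μ) (hν : Integrable (fun x : ℝ => x) ν)
    (hsnd : (μ ⊗ₘ κ).map Prod.snd = ν) :
    Measurable (fun x => bary (κ x)) ∧ Integrable (fun x => bary (κ x)) μ ∧
      ConvexOrder (μ.map fun x => bary (κ x)) ν := by
  have hy : Integrable (fun z : ℝ × ℝ => z.2) (μ ⊗ₘ κ) := by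
    rw [← hsnd] at hν
    exact hν.comp_measurable measurable_snd
  have hTm : Measurable (fun x => bary (κ x)) := by
    unfold bary
    have : StronglyMeasurable (fun x => ∫ y, (fun z : ℝ × ℝ => z.2) (x, y) ∂(κ x)) :=
      StronglyMeasurable.integral_kernel_prod_right' (κ := κ) measurable_snd.stronglyMeasurable
    exact this.measurable
  have hT : Integrable (fun x => bary (κ x)) μ := by
    have := Integrable.integral_compProd (κ := Kernel.const Unit μ) (η := Kernel.prodMkLeft Unit κ)
      (a := ()) (f := fun z : ℝ × ℝ => z.2) hy
    simpa [bary] using this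
  refine ⟨hTm, hT, fun θ hθ => ?_⟩
  have := jensen_compProd μ κ hμ hy θ hθ 0
  simp only [zero_mul, sub_zero] at this
  have hm := (cvx_cont hθ).measurable
  rw [eInt_real] at this ⊢
  rw [eInt_real] at this ⊢
  rw [lintegral_map (by fun_prop) hTm, lintegral_map (by fun_prop) hTm, ← hsnd,
    lintegral_map (by fun_prop) measurable_snd, lintegral_map (by fun_prop) measurable_snd]
  exact this

end WOT

namespace WOT

open scoped CompactlySupported

lemma dual_nonneg (η ν : Measure ℝ) [IsProbabilityMeasure η] [IsProbabilityMeasure ν]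
    (hη : Integrable (fun x : ℝ => x) η) (hν : Integrable (fun x : ℝ => x) ν)
    (hc : ConvexOrder η ν) (φ ψ h : ℝ → ℝ) (hφ : Integrable φ η) (hψ : Integrable ψ ν)
    (H : ∀ x y, 0 ≤ φ x + ψ y + h x * (y - x)) :
    0 ≤ ∫ x, φ x ∂η + ∫ y, ψ y ∂ν := by
  let g : ℝ → ℝ := fun y => ⨆ x, (-φ x - h x * (y - x))
  have hb : ∀ y, BddAbove (Set.range fun x => -φ x - h x * (y - x)) := by
    intro y
    refine ⟨ψ y, ?_⟩
    rintro _ ⟨x, rfl⟩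
    have := H x y
    simp only
    linarith
  have hgψ : ∀ y, g y ≤ ψ y := fun y => ciSup_le fun x => by
    have := H x y
    linarith
  have hle : ∀ x y, -φ x - h x * (y - x) ≤ g y := fun x y => le_ciSup (hb y) x
  have hgc : ConvexOn ℝ Set.univ g := by
    refine ⟨convex_univ, ?_⟩
    intro u _ v _ a b ha hb' hab
    refine ciSup_le fun x => ?_
    have h1 := mul_le_mul_of_nonneg_left (hle x u) ha
    have h2 := mul_le_mul_of_nonneg_left (hle x v) hb'
    simp only [smul_eq_mul]
    have hb1 : b = 1 - a := by linarith
    subst hb1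
    nlinarith
  have hgφ : ∀ x, -φ x ≤ g x := fun x => by
    have := hle x x
    simpa using this
  obtain ⟨a, a', ha⟩ := cvx_affine hgc
  have hgm := (cvx_cont hgc)
  have hgν : Integrable g ν := integrable_of_le_of_le hgm.aestronglyMeasurable
    (Eventually.of_forall ha) (Eventually.of_forall hgψ)
    ((hν.const_mul a).add (integrable_const _)) hψ
  have hord := hc g hgc
  rw [eInt_int hgν] at hord
  have hgη : Integrable g η := by
    by_contra hn
    rw [eInt_top hφ.neg hgφ hgm.aestronglyMeasurable hn] at hord
    exact absurd hord (not_le.2 (EReal.coe_lt_top _))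
  rw [eInt_int hgη, EReal.coe_le_coe_iff] at hord
  have h1 : ∫ x, -φ x ∂η ≤ ∫ x, g x ∂η := integral_mono hφ.neg hgη hgφ
  have h2 : ∫ x, g x ∂ν ≤ ∫ x, ψ x ∂ν := integral_mono hgν hψ hgψ
  rw [integral_neg] at h1
  linarith

/-- The domination cone. -/
def domCone (η ν : Measure ℝ) : PointedCone ℝ (C_c(ℝ × ℝ, ℝ) × ℝ) where
  carrier := {p | ∃ φ ψ h : ℝ → ℝ, Integrable φ η ∧ Integrable ψ ν ∧
    (∀ x y, p.1 (x, y) ≤ φ x + ψ y + h x * (y - x)) ∧ ∫ x, φ x ∂η + ∫ y, ψ y ∂ν ≤ p.2}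
  add_mem' := by
    rintro p q ⟨φ, ψ, h, h1, h2, h3, h4⟩ ⟨φ', ψ', h', h1', h2', h3', h4'⟩
    refine ⟨φ + φ', ψ + ψ', h + h', h1.add h1', h2.add h2', ?_, ?_⟩
    · intro x y
      have := h3 x y
      have := h3' x y
      simp only [Prod.fst_add, CompactlySupportedContinuousMap.coe_add, Pi.add_apply]
      linarith
    · rw [integral_add' h1 h1', integral_add' h2 h2', Prod.snd_add]
      linarith
  zero_mem' := by
    refine ⟨0, 0, 0, integrable_zero _ _ _, integrable_zero _ _ _, ?_, ?_⟩ <;> simp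
  smul_mem' := by
    rintro c p ⟨φ, ψ, h, h1, h2, h3, h4⟩
    have hc := c.2
    refine ⟨fun x => c * φ x, fun x => c * ψ x, fun x => c * h x, h1.const_mul _,
      h2.const_mul _, ?_, ?_⟩
    · intro x y
      have := mul_le_mul_of_nonneg_left (h3 x y) hc
      have e : (c • p).1 (x, y) = (c : ℝ) * p.1 (x, y) := rfl
      rw [e]
      refine this.trans (le_of_eq ?_)
      ring
    · rw [integral_const_mul, integral_const_mul, ← mul_add]
      exact mul_le_mul_of_nonneg_left h4 hc

lemma strassen_pre (η ν : Measure ℝ) [IsProbabilityMeasure η] [IsProbabilityMeasure ν]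
    (hη : Integrable (fun x : ℝ => x) η) (hν : Integrable (fun x : ℝ => x) ν)
    (hc : ConvexOrder η ν) :
    ∃ π : Measure (ℝ × ℝ), IsFiniteMeasureOnCompacts π ∧ ∀ (F : C_c(ℝ × ℝ, ℝ)) (φ ψ h : ℝ → ℝ),
      Integrable φ η → Integrable ψ ν → (∀ x y, F (x, y) ≤ φ x + ψ y + h x * (y - x)) →
      ∫ z, F z ∂π ≤ ∫ x, φ x ∂η + ∫ y, ψ y ∂ν := by
  let e : C_c(ℝ × ℝ, ℝ) × ℝ := (0, 1)
  have he : e ≠ 0 := by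
    intro h
    have := congrArg Prod.snd h
    simp [e] at this
  let f : (C_c(ℝ × ℝ, ℝ) × ℝ) →ₗ.[ℝ] ℝ := LinearPMap.mkSpanSingleton e (1 : ℝ) he
  have hf : ∀ (t : ℝ) (ht : t • e ∈ f.domain), f ⟨t • e, ht⟩ = t := by
    intro t ht
    have := LinearPMap.mkSpanSingleton'_apply (σ := RingHom.id ℝ) e (1 : ℝ)
      (fun c hc => (smul_eq_zero.1 hc).elim (fun hc => by rw [hc, RingHom.map_zero, zero_smul])
        fun hx' => absurd hx' he) t ht
    exact this.trans (by simp)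
  have hdom : ∀ t : ℝ, t • e ∈ f.domain := fun t => Submodule.mem_span_singleton.2 ⟨t, rfl⟩
  obtain ⟨G, hG1, hG2⟩ := riesz_extension (domCone η ν) f (by
    rintro ⟨x, hx⟩ hxs
    obtain ⟨t, rfl⟩ := Submodule.mem_span_singleton.1 hx
    rw [hf]
    obtain ⟨φ, ψ, h, h1, h2, h3, h4⟩ := hxs
    have := dual_nonneg η ν hη hν hc φ ψ h h1 h2 (fun x y => by
      have := h3 x y
      simpa [e] using this)
    have h5 : (t • e).2 = t := by simp [e]
    simp only [h5] at h4
    linarith) (by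
    rintro ⟨F, t⟩
    obtain ⟨C, hC⟩ := F.hasCompactSupport.exists_bound_of_continuous F.continuous
    refine ⟨⟨(C - t) • e, hdom _⟩, fun _ => C, fun _ => 0, fun _ => 0, integrable_const _,
      integrable_const _, ?_, ?_⟩
    · intro x y
      have := (le_abs_self _).trans (hC (x, y))
      simpa [e] using this
    · simp [e])
  have hGe : ∀ t : ℝ, G (0, t) = t := by
    intro t
    have h1 := hG1 ⟨t • e, hdom t⟩
    rw [hf] at h1
    have h2 : t • e = (0, t) := by simp [e]
    simpa [h2] using h1
  let L : C_c(ℝ × ℝ, ℝ) →ₗ[ℝ] ℝ := -(G.comp (LinearMap.inl ℝ _ ℝ))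
  have hL : ∀ (F : C_c(ℝ × ℝ, ℝ)) (t : ℝ), (F, t) ∈ domCone η ν → L F ≤ t := by
    intro F t h
    have h1 := hG2 _ h
    have h2 : ((F, t) : C_c(ℝ × ℝ, ℝ) × ℝ) = (F, 0) + (0, t) := by simp
    rw [h2, map_add, hGe] at h1
    change -(G (F, 0)) ≤ t
    linarith
  have hpos : ∀ F : C_c(ℝ × ℝ, ℝ), 0 ≤ F → 0 ≤ L F := by
    intro F hF
    have := hL (-F) 0 ⟨fun _ => 0, fun _ => 0, fun _ => 0, integrable_const _,
      integrable_const _, fun x y => by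
        have : 0 ≤ F (x, y) := hF (x, y)
        simpa using this, by simp⟩
    rw [map_neg] at this
    linarith
  let Λ : C_c(ℝ × ℝ, ℝ) →ₚ[ℝ] ℝ := PositiveLinearMap.mk₀ L hpos
  refine ⟨RealRMK.rieszMeasure Λ, inferInstance, ?_⟩
  intro F φ ψ h h1 h2 h3
  rw [RealRMK.integral_rieszMeasure]
  exact hL F _ ⟨φ, ψ, h, h1, h2, h3, le_rfl⟩

lemma tail_tendsto (η : Measure ℝ) [IsProbabilityMeasure η]
    (hη : Integrable (fun x : ℝ => x) η) :
    (∀ n : ℕ, Integrable ({x : ℝ | (n : ℝ) < |x|}.indicator fun x => 1 + |x|) η) ∧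
    Tendsto (fun n : ℕ => ∫ x, {x : ℝ | (n : ℝ) < |x|}.indicator (fun x => 1 + |x|) x ∂η)
      atTop (𝓝 0) := by
  have hi : Integrable (fun x : ℝ => 1 + |x|) η := (integrable_const _).add hη.abs
  have hm : ∀ n : ℕ, MeasurableSet {x : ℝ | (n : ℝ) < |x|} := fun n =>
    measurableSet_lt measurable_const (by fun_prop)
  refine ⟨fun n => hi.indicator (hm n), ?_⟩
  have := tendsto_integral_of_dominated_convergence (μ := η)
    (F := fun n : ℕ => {x : ℝ | (n : ℝ) < |x|}.indicator (fun x => 1 + |x|)) (f := fun _ => 0)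
    (fun x => 1 + |x|) (fun n => (hi.indicator (hm n)).aestronglyMeasurable) hi
    (fun n => Eventually.of_forall fun x => by
      refine (norm_indicator_le_norm_self _ _).trans (le_of_eq ?_)
      rw [Real.norm_eq_abs, abs_of_nonneg (by positivity)])
    (Eventually.of_forall fun x => by
      obtain ⟨N, hN⟩ := exists_nat_ge |x|
      refine tendsto_const_nhds.congr' ?_
      filter_upwards [eventually_ge_atTop N] with n hn
      rw [Set.indicator_of_notMem]
      simp only [Set.mem_ofPred_eq, not_lt]
      exact hN.trans (by exact_mod_cast hn))
  simpa using this

lemma strassen_lim (η ν : Measure ℝ) [IsProbabilityMeasure η] [IsProbabilityMeasure ν]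
    (hη : Integrable (fun x : ℝ => x) η) (hν : Integrable (fun x : ℝ => x) ν)
    (hc : ConvexOrder η ν) :
    ∃ π : Measure (ℝ × ℝ), Integrable (fun z : ℝ × ℝ => 1 + ‖z‖) π ∧
      ∀ (F : ℝ × ℝ → ℝ) (φ ψ h : ℝ → ℝ) (C : ℝ), Continuous F → (∀ z, |F z| ≤ C * (1 + ‖z‖)) →
      Integrable φ η → Integrable ψ ν → (∀ x y, F (x, y) ≤ φ x + ψ y + h x * (y - x)) →
      ∫ z, F z ∂π ≤ ∫ x, φ x ∂η + ∫ y, ψ y ∂ν := by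
  obtain ⟨π, hπ, H⟩ := strassen_pre η ν hη hν hc
  have hχ : ∀ n : ℕ, ∃ f : C(ℝ × ℝ, ℝ), EqOn f 1 (Metric.closedBall 0 n) ∧ HasCompactSupport f ∧
      ∀ x, f x ∈ Icc (0 : ℝ) 1 := by
    intro n
    obtain ⟨f, h1, -, h3, h4⟩ := exists_continuous_one_zero_of_isCompact
      (isCompact_closedBall (0 : ℝ × ℝ) (n : ℝ)) isClosed_empty (Set.disjoint_empty _)
    exact ⟨f, h1, h3, h4⟩
  choose χ hχ1 hχ2 hχ3 using hχ
  have hlim : ∀ (F : ℝ × ℝ → ℝ) z, Tendsto (fun n => F z * χ n z) atTop (𝓝 (F z)) := by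
    intro F z
    obtain ⟨N, hN⟩ := exists_nat_ge ‖z‖
    refine tendsto_const_nhds.congr' ?_
    filter_upwards [eventually_ge_atTop N] with n hn
    have : χ n z = 1 := hχ1 n (by
      rw [mem_closedBall_zero_iff]
      exact hN.trans (by exact_mod_cast hn))
    rw [this, mul_one]
  let Fn : ∀ (F : ℝ × ℝ → ℝ), Continuous F → ℕ → C_c(ℝ × ℝ, ℝ) := fun F hF n =>
    ⟨⟨fun z => F z * χ n z, by fun_prop⟩, (hχ2 n).mul_left⟩
  have hFn : ∀ F hF n z, Fn F hF n z = F z * χ n z := fun _ _ _ _ => rfl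
  have hint : ∀ F (hF : Continuous F) n, Integrable (fun z => F z * χ n z) π := fun F hF n =>
    (Fn F hF n).continuous.integrable_of_hasCompactSupport (Fn F hF n).hasCompactSupport
  have hI : Integrable (fun z : ℝ × ℝ => 1 + ‖z‖) π := by
    have hcont : Continuous (fun z : ℝ × ℝ => 1 + ‖z‖) := by fun_prop
    refine ⟨hcont.aestronglyMeasurable, ?_⟩
    set B : ℝ := ∫ x, (1 + |x|) ∂η + ∫ y, |y| ∂ν with hB
    have hle : ∀ n, ∫⁻ z, ENNReal.ofReal ((1 + ‖z‖) * χ n z) ∂π ≤ ENNReal.ofReal B := by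
      intro n
      rw [← ofReal_integral_eq_lintegral_ofReal (hint _ hcont n)]
      · refine ENNReal.ofReal_le_ofReal ?_
        refine H (Fn _ hcont n) (fun x => 1 + |x|) (fun y => |y|) (fun _ => 0)
          ((integrable_const _).add hη.abs) hν.abs ?_
        intro x y
        rw [hFn _ hcont]
        have h1 : ‖((x, y) : ℝ × ℝ)‖ ≤ |x| + |y| := by
          rw [Prod.norm_mk]
          exact max_le (by simp) (by simp)
        have h2 := (hχ3 n (x, y)).2
        have h3 := (hχ3 n (x, y)).1
        have h4 := norm_nonneg ((x, y) : ℝ × ℝ)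
        have : (1 + ‖((x, y) : ℝ × ℝ)‖) * χ n (x, y) ≤ (1 + ‖((x, y) : ℝ × ℝ)‖) * 1 :=
          mul_le_mul_of_nonneg_left h2 (by positivity)
        linarith
      · exact Eventually.of_forall fun z => mul_nonneg (by positivity) (hχ3 n z).1
    have hfin : ∫⁻ z, ENNReal.ofReal (1 + ‖z‖) ∂π ≤ ENNReal.ofReal B := by
      calc ∫⁻ z, ENNReal.ofReal (1 + ‖z‖) ∂π
          = ∫⁻ z, liminf (fun n => ENNReal.ofReal ((1 + ‖z‖) * χ n z)) atTop ∂π := by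
            refine lintegral_congr fun z => ?_
            exact (((ENNReal.continuous_ofReal.tendsto _).comp
              (hlim (fun z => 1 + ‖z‖) z)).liminf_eq).symm
        _ ≤ liminf (fun n => ∫⁻ z, ENNReal.ofReal ((1 + ‖z‖) * χ n z) ∂π) atTop :=
            lintegral_liminf_le fun n => by
              have : Continuous (fun z : ℝ × ℝ => (1 + ‖z‖) * χ n z) := by fun_prop
              exact this.measurable.ennreal_ofReal
        _ ≤ liminf (fun _ : ℕ => ENNReal.ofReal B) atTop :=
            liminf_le_liminf (Eventually.of_forall hle)
        _ = ENNReal.ofReal B := liminf_const _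
    refine lt_of_le_of_lt (le_trans (lintegral_mono fun z => ?_) hfin) ENNReal.ofReal_lt_top
    rw [Real.enorm_eq_ofReal_abs, abs_of_nonneg (by positivity)]
  refine ⟨π, hI, ?_⟩
  intro F φ ψ h C hF hFC hφ hψ hdom
  have hC : 0 ≤ C := by
    have := (abs_nonneg _).trans (hFC 0)
    simpa using this
  obtain ⟨hη1, hη2⟩ := tail_tendsto η hη
  obtain ⟨hν1, hν2⟩ := tail_tendsto ν hν
  set r : ℕ → ℝ → ℝ := fun n => {x : ℝ | (n : ℝ) < |x|}.indicator (fun x => 1 + |x|) with hr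
  have hr0 : ∀ n x, 0 ≤ r n x := fun n x => Set.indicator_nonneg (fun x _ => by positivity) x
  have hr1 : ∀ (n : ℕ) x, (n : ℝ) < |x| → r n x = 1 + |x| := fun n x hx =>
    Set.indicator_of_mem (s := {x : ℝ | (n : ℝ) < |x|}) hx _
  have hn : ∀ n, ∫ z, F z * χ n z ∂π
      ≤ (∫ x, φ x ∂η + C * ∫ x, r n x ∂η) + (∫ y, ψ y ∂ν + C * ∫ y, r n y ∂ν) := by
    intro n
    have := H (Fn F hF n) (fun x => φ x + C * r n x) (fun y => ψ y + C * r n y) h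
      (hφ.add ((hη1 n).const_mul C)) (hψ.add ((hν1 n).const_mul C)) (by
      intro x y
      rw [hFn _ hF]
      have h1 := hdom x y
      have hCx := mul_nonneg hC (hr0 n x)
      have hCy := mul_nonneg hC (hr0 n y)
      obtain ⟨hχ0, hχl⟩ := hχ3 n (x, y)
      by_cases hz : ‖((x, y) : ℝ × ℝ)‖ ≤ n
      · have : χ n (x, y) = 1 := hχ1 n (by rwa [mem_closedBall_zero_iff])
        rw [this]
        linarith
      · push Not at hz
        have h2 : 1 + ‖((x, y) : ℝ × ℝ)‖ ≤ r n x + r n y := by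
          rw [Prod.norm_mk, Real.norm_eq_abs, Real.norm_eq_abs] at hz ⊢
          rcases le_total |x| |y| with hxy | hxy
          · rw [max_eq_right hxy] at hz ⊢
            rw [hr1 n y hz]
            have := hr0 n x
            linarith
          · rw [max_eq_left hxy] at hz ⊢
            rw [hr1 n x hz]
            have := hr0 n y
            linarith
        have h3 := mul_le_mul_of_nonneg_left h2 hC
        have h4 := hFC (x, y)
        have h5 : -F (x, y) * (1 - χ n (x, y)) ≤ |F (x, y)| * 1 :=
          mul_le_mul (neg_le_abs _) (by linarith) (by linarith) (abs_nonneg _)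
        nlinarith)
    rw [integral_add hφ ((hη1 n).const_mul C), integral_add hψ ((hν1 n).const_mul C),
      integral_const_mul, integral_const_mul] at this
    exact this
  have hL : Tendsto (fun n => ∫ z, F z * χ n z ∂π) atTop (𝓝 (∫ z, F z ∂π)) := by
    refine tendsto_integral_of_dominated_convergence (fun z => C * (1 + ‖z‖))
      (fun n => (hint F hF n).aestronglyMeasurable) (hI.const_mul C) ?_ ?_
    · refine fun n => Eventually.of_forall fun z => ?_
      rw [norm_mul, Real.norm_eq_abs, Real.norm_eq_abs, abs_of_nonneg (hχ3 n z).1]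
      have := mul_le_mul_of_nonneg_left (hχ3 n z).2 (abs_nonneg (F z))
      linarith [hFC z]
    · exact Eventually.of_forall fun z => hlim F z
  have hR := ((tendsto_const_nhds (x := ∫ x, φ x ∂η)).add (hη2.const_mul C)).add
    ((tendsto_const_nhds (x := ∫ y, ψ y ∂ν)).add (hν2.const_mul C))
  have := le_of_tendsto_of_tendsto' hL hR hn
  simpa using this

/-- Strassen's theorem on the line. -/
lemma strassen (η ν : Measure ℝ) [IsProbabilityMeasure η] [IsProbabilityMeasure ν]
    (hη : Integrable (fun x : ℝ => x) η) (hν : Integrable (fun x : ℝ => x) ν)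
    (hc : ConvexOrder η ν) :
    ∃ M : Kernel ℝ ℝ, IsMarkovKernel M ∧ (η ⊗ₘ M).map Prod.snd = ν ∧
      ∀ᵐ x ∂η, bary (M x) = x := by
  obtain ⟨π, hI, H⟩ := strassen_lim η ν hη hν hc
  have hfin : IsFiniteMeasure π := by
    have h1 : Integrable (fun _ : ℝ × ℝ => (1 : ℝ)) π :=
      hI.mono aestronglyMeasurable_const (Eventually.of_forall fun z => by
        rw [Real.norm_eq_abs, Real.norm_eq_abs, abs_one, abs_of_nonneg (by positivity)]
        linarith [norm_nonneg z])
    rw [integrable_const_iff] at h1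
    simpa using h1
  have hx : Integrable (fun z : ℝ × ℝ => z.1) π :=
    hI.mono (by fun_prop) (Eventually.of_forall fun z => by
      have := norm_fst_le z
      rw [Real.norm_of_nonneg (r := 1 + ‖z‖) (by positivity)]
      linarith)
  have hy : Integrable (fun z : ℝ × ℝ => z.2) π :=
    hI.mono (by fun_prop) (Eventually.of_forall fun z => by
      have := norm_snd_le z
      rw [Real.norm_of_nonneg (r := 1 + ‖z‖) (by positivity)]
      linarith)
  have hb : ∀ (f : BoundedContinuousFunction ℝ ℝ) (g : ℝ × ℝ → ℝ) (z : ℝ × ℝ),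
      |f (g z)| ≤ ‖f‖ * (1 + ‖z‖) := by
    intro f g z
    have h1 : |f (g z)| ≤ ‖f‖ := f.norm_coe_le_norm (g z)
    have := mul_nonneg (norm_nonneg f) (norm_nonneg z)
    linarith
  have hfst : π.map Prod.fst = η := by
    refine ext_of_forall_integral_eq_of_IsFiniteMeasure fun f => ?_
    rw [integral_map measurable_fst.aemeasurable f.continuous.aestronglyMeasurable]
    have key : ∀ f : BoundedContinuousFunction ℝ ℝ, ∫ z, f z.1 ∂π ≤ ∫ x, f x ∂η := by
      intro f
      have := H (fun z => f z.1) f 0 0 ‖f‖ (by fun_prop) (hb f Prod.fst) (f.integrable η)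
        (integrable_zero _ _ _) (by simp)
      simpa using this
    refine le_antisymm (key f) ?_
    have := key (-f)
    simp only [BoundedContinuousFunction.coe_neg, Pi.neg_apply, integral_neg] at this
    linarith
  have hsnd : π.map Prod.snd = ν := by
    refine ext_of_forall_integral_eq_of_IsFiniteMeasure fun f => ?_
    rw [integral_map measurable_snd.aemeasurable f.continuous.aestronglyMeasurable]
    have key : ∀ f : BoundedContinuousFunction ℝ ℝ, ∫ z, f z.2 ∂π ≤ ∫ x, f x ∂ν := by
      intro f
      have := H (fun z => f z.2) 0 f 0 ‖f‖ (by fun_prop) (hb f Prod.snd)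
        (integrable_zero _ _ _) (f.integrable ν) (by simp)
      simpa using this
    refine le_antisymm (key f) ?_
    have := key (-f)
    simp only [BoundedContinuousFunction.coe_neg, Pi.neg_apply, integral_neg] at this
    linarith
  have hdis : η ⊗ₘ π.condKernel = π := by
    have := π.disintegrate π.condKernel
    rwa [Measure.fst, hfst] at this
  refine ⟨π.condKernel, inferInstance, by rw [hdis, hsnd], ?_⟩
  have hyc : Integrable (fun z : ℝ × ℝ => z.2) (η ⊗ₘ π.condKernel) := by rwa [hdis]
  obtain ⟨-, hT, -⟩ := bary_order η ν π.condKernel hη hν (by rw [hdis, hsnd])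
  have hae : ∀ᵐ x ∂η, bary (π.condKernel x) - x = 0 := by
    refine ae_eq_zero_of_integral_contDiff_smul_eq_zero (hT.sub hη).locallyIntegrable ?_
    intro g hg hgs
    obtain ⟨C, hC⟩ := hgs.exists_bound_of_continuous hg.continuous
    have hgc := hg.continuous
    have hC0 : 0 ≤ C := (norm_nonneg _).trans (hC 0)
    have hbd : ∀ z : ℝ × ℝ, |g z.1 * (z.2 - z.1)| ≤ 2 * C * (1 + ‖z‖) := by
      intro z
      rw [abs_mul]
      have h1 : |z.2 - z.1| ≤ 2 * ‖z‖ := by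
        have h2 := abs_sub z.2 z.1
        have h3 : |z.1| ≤ ‖z‖ := norm_fst_le z
        have h4 : |z.2| ≤ ‖z‖ := norm_snd_le z
        linarith
      have := mul_le_mul (hC z.1) h1 (abs_nonneg _) hC0
      rw [Real.norm_eq_abs] at this
      linarith
    have hcont : Continuous (fun z : ℝ × ℝ => g z.1 * (z.2 - z.1)) := by fun_prop
    have h0 : ∫ z, g z.1 * (z.2 - z.1) ∂π = 0 := by
      apply le_antisymm
      · have := H (fun z => g z.1 * (z.2 - z.1)) 0 0 g (2 * C) hcont hbd
          (integrable_zero _ _ _) (integrable_zero _ _ _) (by simp)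
        simpa using this
      · have := H (fun z => -(g z.1 * (z.2 - z.1))) 0 0 (-g) (2 * C) hcont.neg
          (by simpa only [abs_neg] using hbd)
          (integrable_zero _ _ _) (integrable_zero _ _ _) (by simp)
        rw [integral_neg] at this
        simp at this
        linarith
    have hint : Integrable (fun z : ℝ × ℝ => g z.1 * (z.2 - z.1)) (η ⊗ₘ π.condKernel) := by
      rw [hdis]
      refine (hI.const_mul (2 * C)).mono hcont.aestronglyMeasurable (Eventually.of_forall fun z => ?_)
      rw [Real.norm_eq_abs]
      exact (hbd z).trans (le_abs_self _)
    rw [← hdis, Measure.integral_compProd hint] at h0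
    rw [← h0]
    refine integral_congr_ae ?_
    filter_upwards [((Measure.integrable_compProd_iff hyc.aestronglyMeasurable).1 hyc).1] with x hx
    rw [integral_const_mul, integral_sub hx (integrable_const _), integral_const, probReal_univ,
      one_smul, smul_eq_mul]
    rfl
  filter_upwards [hae] with x hx
  linarith

end WOT
open WOT

/-- the one-dimensional barycentric weak transport problem with convex cost
reduces to optimal transport onto measures dominated in convex order
(equation `eq:1d-lower bound'`). -/
theorem statement14 (μ ν : Measure ℝ) [IsProbabilityMeasure μ] [IsProbabilityMeasure ν]
    (hμ : FinMom 1 (0 : ℝ) μ) (hν : FinMom 1 (0 : ℝ) ν)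
    (θ : ℝ → ℝ) (hθ : ConvexOn ℝ Set.univ θ) :
    sInf {v : EReal | ∃ π ∈ Couplings μ ν, ∃ K : ℝ → Measure ℝ, IsDisint π μ K ∧
        v = eInt (fun x => ((θ (bary (K x) - x) : ℝ) : EReal)) μ}
      = sInf {v : EReal | ∃ η : Measure ℝ, IsProbabilityMeasure η ∧ FinMom 1 (0 : ℝ) η ∧
          ConvexOrder η ν ∧ ∃ π ∈ Couplings μ η,
          v = eInt (fun z : ℝ × ℝ => ((θ (z.2 - z.1) : ℝ) : EReal)) π} := by
  have hμ' := finMom_iff.1 hμ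
  have hν' := finMom_iff.1 hν
  apply le_antisymm
  · refine le_sInf ?_
    rintro v ⟨η, hη, hηm, hord, π, ⟨hπ1, hπ2⟩, rfl⟩
    have hη' := finMom_iff.1 hηm
    have hπp : IsProbabilityMeasure π := by
      have hμp : IsProbabilityMeasure (π.map Prod.fst) := by rw [hπ1]; infer_instance
      exact Measure.isProbabilityMeasure_of_map Prod.fst
    have hdis : μ ⊗ₘ π.condKernel = π := by
      have := π.disintegrate π.condKernel
      rwa [Measure.fst, hπ1] at this
    obtain ⟨hTm, hT, hTo⟩ := bary_order μ η π.condKernel hμ' hη' (by rw [hdis, hπ2])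
    set T : ℝ → ℝ := fun x => bary (π.condKernel x) with hTdef
    have hpT : IsProbabilityMeasure (μ.map T) := Measure.isProbabilityMeasure_map hTm.aemeasurable
    have hTi : Integrable (fun x : ℝ => x) (μ.map T) :=
      (integrable_map_measure aestronglyMeasurable_id hTm.aemeasurable).2 hT
    obtain ⟨M, hM, hM2, hM3⟩ := strassen (μ.map T) ν hTi hν'
      (fun θ hθ => (hTo θ hθ).trans (hord θ hθ))
    have hJ := jensen_compProd μ π.condKernel hμ' (by
      rw [hdis]
      rw [← hπ2] at hη'
      exact hη'.comp_measurable measurable_snd) θ hθ 1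
    rw [hdis] at hJ
    simp only [one_mul] at hJ
    refine le_trans ?_ hJ
    refine sInf_le ⟨μ ⊗ₘ (M.comap T hTm), ⟨Measure.fst_compProd _ _, ?_⟩, fun x => M (T x),
      ⟨M.measurable.comp hTm, fun x => inferInstance, fun s hs => Measure.compProd_apply hs⟩, ?_⟩
    · rw [← hM2]
      ext s hs
      rw [Measure.map_apply measurable_snd hs, Measure.map_apply measurable_snd hs,
        Measure.compProd_apply (measurable_snd hs), Measure.compProd_apply (measurable_snd hs),
        lintegral_map (Kernel.measurable_kernel_prodMk_left (measurable_snd hs)) hTm]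
      rfl
    · have hae := ae_of_ae_map hTm.aemeasurable hM3
      rw [eInt_real, eInt_real]
      congr 2
      · refine lintegral_congr_ae ?_
        filter_upwards [hae] with x hx
        rw [hx]
      · refine lintegral_congr_ae ?_
        filter_upwards [hae] with x hx
        rw [hx]
  · refine le_sInf ?_
    rintro v ⟨π, ⟨hπ1, hπ2⟩, K, hK, rfl⟩
    obtain ⟨κ, hκ, hκK, rfl⟩ := disint_eq hK
    obtain ⟨hTm, hT, hTo⟩ := bary_order μ ν κ hμ' hν' hπ2
    simp only [← hκK]
    have hm := (cvx_cont hθ).measurable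
    refine sInf_le ⟨μ.map fun x => bary (κ x), Measure.isProbabilityMeasure_map hTm.aemeasurable,
      finMom_iff.2 ((integrable_map_measure aestronglyMeasurable_id hTm.aemeasurable).2 hT), hTo,
      μ.map fun x => (x, bary (κ x)), ⟨?_, ?_⟩, ?_⟩
    · rw [Measure.map_map measurable_fst (by fun_prop)]
      exact Measure.map_id
    · rw [Measure.map_map measurable_snd (by fun_prop)]
      rfl
    · rw [eInt_real, eInt_real, lintegral_map (by fun_prop) (by fun_prop),
        lintegral_map (by fun_prop) (by fun_prop)]
end
end

section
/- Let θ : ℝ → ℝ be convex with left-hand derivative ∂_−θ, let I ⊂ ℝ, let T : I → ℝ be nondecreasing, let [a,b] be the closure of the convex hull of T(I), and fix y₀ ∈ (a,b). Define S̲(y) := inf{ x ∈ I : T(x) ≥ y } for y ∈ (a,b) (which is real-valued) and ψ̲(y) := ∫_{y₀}^y ∂_−θ(z − S̲(z)) dz for y ∈ (a,b). Then ψ̲ is continuous on (a,b), and for every x ∈ I and every y' ∈ [T(x−), T(x)] ∩ (a,b) one has −ψ̲(y') + θ(y' − x) = inf_{y ∈ (a,b)} [ −ψ̲(y) + θ(y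 − x) ], where T(x−) denotes the left limit of T at x. -/
open Set Classical

noncomputable section

/-- The left-hand derivative of a (convex) function `θ : ℝ → ℝ`:
the supremum of the slopes from the left. -/
def leftDeriv (θ : ℝ → ℝ) (z : ℝ) : ℝ :=
  sSup ((fun w => (θ z - θ w) / (z - w)) '' Iio z)

/-- `S̲(y) = inf {x ∈ I : T x ≥ y}`. -/
def Slow (T : ℝ → ℝ) (I : Set ℝ) (y : ℝ) : ℝ := sInf {x | x ∈ I ∧ y ≤ T x}

/-- `ψ̲(y) = ∫_{y₀}^y ∂₋θ(z - S̲(z)) dz`. -/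
def psiLow (θ T : ℝ → ℝ) (I : Set ℝ) (y₀ y : ℝ) : ℝ :=
  ∫ z in y₀..y, leftDeriv θ (z - Slow T I z)

/-- The left limit `T(x−)` of `T` at `x` along `I` (with the convention `T(x−) = T x` if
there are no points of `I` to the left of `x`). -/

def leftLimOn (T : ℝ → ℝ) (I : Set ℝ) (x : ℝ) : ℝ :=
  if (I ∩ Iio x).Nonempty then sSup (T '' (I ∩ Iio x)) else T x

lemma ld_eq (θ : ℝ → ℝ) (hθ : ConvexOn ℝ Set.univ θ) (z : ℝ) :
    leftDeriv θ z = derivWithin θ (Iio z) z := by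
  rw [hθ.leftDeriv_eq_sSup_slope_of_mem_interior (by simp)]
  unfold leftDeriv
  congr 1
  have : {y | y ∈ (univ : Set ℝ) ∧ y < z} = Iio z := by ext; simp
  rw [this]
  apply image_congr
  intro w hw
  rw [slope_def_field, ← neg_div_neg_eq]
  simp

lemma ld_mono (θ : ℝ → ℝ) (hθ : ConvexOn ℝ Set.univ θ) : Monotone (leftDeriv θ) := by
  have h := hθ.monotoneOn_leftDeriv
  rw [interior_univ, monotoneOn_univ] at h
  intro x y hxy
  rw [ld_eq θ hθ, ld_eq θ hθ]
  exact h hxy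

lemma ld_ftc (θ : ℝ → ℝ) (hθ : ConvexOn ℝ Set.univ θ) (c d : ℝ) :
    ∫ z in c..d, leftDeriv θ z = θ d - θ c := by
  obtain ⟨K, hK⟩ := hθ.locallyLipschitz.locallyLipschitzOn.exists_lipschitzOnWith_of_compact
    (isCompact_uIcc (a := c) (b := d))
  have hac := hK.absolutelyContinuousOnInterval
  rw [← hac.integral_deriv_eq_sub]
  apply intervalIntegral.integral_congr_ae
  filter_upwards [hac.ae_differentiableAt] with z hz hm
  rw [ld_eq θ hθ]
  exact (hz (uIoc_subset_uIcc hm)).derivWithin (uniqueDiffWithinAt_Iio z)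

lemma ld_ftc_shift (θ : ℝ → ℝ) (hθ : ConvexOn ℝ Set.univ θ) (c d x : ℝ) :
    ∫ z in c..d, leftDeriv θ (z - x) = θ (d - x) - θ (c - x) := by
  rw [intervalIntegral.integral_comp_sub_right (fun z => leftDeriv θ z), ld_ftc θ hθ]

lemma exists_lt (I : Set ℝ) (T : ℝ → ℝ) (a b : ℝ)
    (hab : closure (convexHull ℝ (T '' I)) = Icc a b) (y : ℝ) (hy : y ∈ Ioo a b) :
    (∃ x ∈ I, T x < y) ∧ ∃ x ∈ I, y < T x := by
  have hle : a ≤ b := (hy.1.trans hy.2).le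
  constructor
  · by_contra! h
    have h1 : closure (convexHull ℝ (T '' I)) ⊆ Ici y :=
      closure_minimal (convexHull_min (by rintro _ ⟨x, hx, rfl⟩; exact h x hx) (convex_Ici y))
        isClosed_Ici
    rw [hab] at h1
    exact absurd (h1 (left_mem_Icc.2 hle)) (not_le.2 hy.1)
  · by_contra! h
    have h1 : closure (convexHull ℝ (T '' I)) ⊆ Iic y :=
      closure_minimal (convexHull_min (by rintro _ ⟨x, hx, rfl⟩; exact h x hx) (convex_Iic y))
        isClosed_Iic
    rw [hab] at h1
    exact absurd (h1 (right_mem_Icc.2 hle)) (not_le.2 hy.2)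

lemma set_ok (I : Set ℝ) (T : ℝ → ℝ) (hT : MonotoneOn T I) (a b : ℝ)
    (hab : closure (convexHull ℝ (T '' I)) = Icc a b) (y : ℝ) (hy : y ∈ Ioo a b) :
    {x | x ∈ I ∧ y ≤ T x}.Nonempty ∧ BddBelow {x | x ∈ I ∧ y ≤ T x} := by
  obtain ⟨⟨u, hu, hu'⟩, v, hv, hv'⟩ := exists_lt I T a b hab y hy
  refine ⟨⟨v, hv, hv'.le⟩, u, ?_⟩
  rintro w ⟨hw, hw'⟩
  by_contra! h
  linarith [hT hw hu h.le]

lemma slow_mono (I : Set ℝ) (T : ℝ → ℝ) (hT : MonotoneOn T I) (a b : ℝ)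
    (hab : closure (convexHull ℝ (T '' I)) = Icc a b) : MonotoneOn (Slow T I) (Ioo a b) := by
  intro y hy z hz hyz
  exact csInf_le_csInf (set_ok I T hT a b hab y hy).2 (set_ok I T hT a b hab z hz).1
    (fun w hw => ⟨hw.1, hyz.trans hw.2⟩)

lemma integrand_int (θ : ℝ → ℝ) (hθ : ConvexOn ℝ Set.univ θ) (I : Set ℝ) (T : ℝ → ℝ)
    (hT : MonotoneOn T I) (a b : ℝ) (hab : closure (convexHull ℝ (T '' I)) = Icc a b)
    (c d : ℝ) (hc : c ∈ Ioo a b) (hd : d ∈ Ioo a b) :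
    IntervalIntegrable (fun z => leftDeriv θ (z - Slow T I z)) MeasureTheory.volume c d := by
  wlog hcd : c ≤ d generalizing c d
  · exact (this d c hd hc (not_le.1 hcd).le).symm
  have hsub : Icc c d ⊆ Ioo a b := fun z hz => ⟨hc.1.trans_le hz.1, hz.2.trans_lt hd.2⟩
  have hS := slow_mono I T hT a b hab
  have hm := ld_mono θ hθ
  rw [intervalIntegrable_iff_integrableOn_Icc_of_le hcd]
  refine MeasureTheory.IntegrableOn.of_bound ?_ ?_ (C := max |leftDeriv θ (d - Slow T I c)|
    |leftDeriv θ (c - Slow T I d)|) ?_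
  · simp
  · apply AEMeasurable.aestronglyMeasurable
    exact hm.measurable.comp_aemeasurable (aemeasurable_id.sub
      (aemeasurable_restrict_of_monotoneOn measurableSet_Icc (hS.mono hsub)))
  · refine (MeasureTheory.ae_restrict_iff' measurableSet_Icc).2 (Filter.Eventually.of_forall ?_)
    intro z hz
    have h1 := hS hc (hsub hz) hz.1
    have h2 := hS (hsub hz) hd hz.2
    have h3 : leftDeriv θ (z - Slow T I z) ≤ leftDeriv θ (d - Slow T I c) :=
      hm (by linarith [hz.2])
    have h4 : leftDeriv θ (c - Slow T I d) ≤ leftDeriv θ (z - Slow T I z) :=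
      hm (by linarith [hz.1])
    rw [Real.norm_eq_abs, max_comm]
    exact abs_le_max_abs_abs h4 h3

/-- Lemma `lem:dual optimizers` (a). -/
theorem statement16 (θ : ℝ → ℝ) (hθ : ConvexOn ℝ Set.univ θ) (I : Set ℝ) (T : ℝ → ℝ)
    (hT : MonotoneOn T I) (a b : ℝ) (hab : closure (convexHull ℝ (T '' I)) = Icc a b)
    (y₀ : ℝ) (hy₀ : y₀ ∈ Ioo a b) :
    (∀ y ∈ Ioo a b, {x | x ∈ I ∧ y ≤ T x}.Nonempty ∧ BddBelow {x | x ∈ I ∧ y ≤ T x}) ∧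
    ContinuousOn (psiLow θ T I y₀) (Ioo a b) ∧
    ∀ x ∈ I, ∀ y' ∈ Icc (leftLimOn T I x) (T x) ∩ Ioo a b,
      -psiLow θ T I y₀ y' + θ (y' - x)
        = sInf ((fun y => -psiLow θ T I y₀ y + θ (y - x)) '' Ioo a b) := by
  have hok := set_ok I T hT a b hab
  have hint := integrand_int θ hθ I T hT a b hab
  have hm := ld_mono θ hθ
  refine ⟨hok, ?_, ?_⟩
  · intro y hy
    obtain ⟨c, hc1, hc2⟩ := exists_between (lt_min hy₀.1 hy.1)
    obtain ⟨d, hd1, hd2⟩ := exists_between (max_lt hy₀.2 hy.2)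
    rw [lt_min_iff] at hc2
    rw [max_lt_iff] at hd1
    have hcd : c ≤ d := (hc2.1.trans hd1.1).le
    have hi := hint c d ⟨hc1, by linarith⟩ ⟨by linarith, hd2⟩
    have := intervalIntegral.continuousOn_primitive_interval' hi (a := y₀)
      (by rw [uIcc_of_le hcd]; exact ⟨hc2.1.le, hd1.1.le⟩)
    rw [uIcc_of_le hcd] at this
    exact (this.continuousAt (Icc_mem_nhds hc2.2 hd1.2)).continuousWithinAt
  · rintro x hx y' ⟨⟨hl, hr⟩, hy'⟩
    have hless : ∀ z ∈ Ioo a b, z ≤ y' → Slow T I z ≤ x := fun z hz hzy =>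
      csInf_le (hok z hz).2 ⟨hx, hzy.trans hr⟩
    have hgt : ∀ z ∈ Ioo a b, y' < z → x ≤ Slow T I z := by
      intro z hz hzy
      apply le_csInf (hok z hz).1
      rintro w ⟨hw, hw'⟩
      by_contra! h
      have hne : (I ∩ Iio x).Nonempty := ⟨w, hw, h⟩
      rw [leftLimOn, if_pos hne] at hl
      have : T w ≤ sSup (T '' (I ∩ Iio x)) := by
        refine le_csSup ⟨T x, ?_⟩ ⟨w, ⟨hw, h⟩, rfl⟩
        rintro _ ⟨v, hv, rfl⟩
        exact hT hv.1 hx (le_of_lt hv.2)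
      linarith
    have key : ∀ y ∈ Ioo a b, -psiLow θ T I y₀ y' + θ (y' - x) ≤
        -psiLow θ T I y₀ y + θ (y - x) := by
      intro y hy
      have e1 : psiLow θ T I y₀ y - psiLow θ T I y₀ y' =
          ∫ z in y'..y, leftDeriv θ (z - Slow T I z) :=
        intervalIntegral.integral_interval_sub_left (hint _ _ hy₀ hy) (hint _ _ hy₀ hy')
      have hmi : ∀ c d : ℝ, IntervalIntegrable (fun z => leftDeriv θ (z - x))
          MeasureTheory.volume c d := fun c d =>
        Monotone.intervalIntegrable (fun u v huv => hm (by linarith))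
      rcases le_total y' y with h | h
      · have e2 := ld_ftc_shift θ hθ y' y x
        have : ∫ z in y'..y, leftDeriv θ (z - Slow T I z) ≤ ∫ z in y'..y, leftDeriv θ (z - x) := by
          apply intervalIntegral.integral_mono_on_of_le_Ioo h (hint _ _ hy' hy) (hmi _ _)
          intro z hz
          apply hm
          linarith [hgt z ⟨hy'.1.trans hz.1, hz.2.trans hy.2⟩ hz.1]
        linarith
      · have e2 := ld_ftc_shift θ hθ y y' x
        rw [intervalIntegral.integral_symm] at e1
        have : ∫ z in y..y', leftDeriv θ (z - x) ≤ ∫ z in y..y', leftDeriv θ (z - Slow T I z) := by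
          apply intervalIntegral.integral_mono_on_of_le_Ioo h (hmi _ _) (hint _ _ hy hy')
          intro z hz
          apply hm
          linarith [hless z ⟨hy.1.trans hz.1, hz.2.trans hy'.2⟩ hz.2.le]
        linarith
    symm
    apply IsLeast.csInf_eq
    refine ⟨⟨y', hy', rfl⟩, ?_⟩
    rintro _ ⟨y, hy, rfl⟩
    exact key y hy
end
end
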